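/- arXiv:1902.04945 — 3 statements merged into one kernel-verified Lean document; each statement's English description precedes it below -/
import Mathlib

section
/- Let d ≥ 1 be an integer, σ1, σ2 ∈ ℝ, 0 < q_i ≤ ∞ and 0 < p_i ≤ u_i < ∞ for i = 1, 2. Assume p1 < p2, p1/u1 < p2/u2 and (σ1 − σ2)/d > 1/p1 − 1/p2. Then there exists c > 0 such that for all k ∈ ℕ, e_k(id : ñ^{σ1}_{u1,p1,q1}(Q) → ñ^{σ2}_{u2,p2,q2}(Q)) ≤ c · k^{−(σ1−σ2)/d}. -/
open scoped ENNReal NNReal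

noncomputable section

/-- `Q_{j,m} ⊆ Q = [0,1)^d` iff `0 ≤ m i < 2^j` for every coordinate `i`. -/
def inUnitCube (d j : ℕ) (m : Fin d → ℤ) : Prop :=
  ∀ i, 0 ≤ m i ∧ m i < 2 ^ j

/-- For `ν ≤ j`: `Q_{j,m} ⊆ Q_{ν,k}`. -/
def cubeSub (d j ν : ℕ) (m k : Fin d → ℤ) : Prop :=
  ∀ i, k i * 2 ^ (j - ν) ≤ m i ∧ m i < (k i + 1) * 2 ^ (j - ν)

/-- The finite-dimensional Morrey quasi-norm `‖· | m^{2^{jd}}_{u,p}‖` (`ℝ≥0∞`-valued),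
on coefficients indexed by the `m ∈ ℤ^d` with `Q_{j,m} ⊆ Q` (other coordinates are ignored). -/
def mNorm (d : ℕ) (u p : ℝ) (j : ℕ) (lam : (Fin d → ℤ) → ℂ) : ℝ≥0∞ :=
  ⨆ νk : {νk : ℕ × (Fin d → ℤ) // νk.1 ≤ j ∧ inUnitCube d νk.1 νk.2},
    (2 : ℝ≥0∞) ^ ((d : ℝ) * ((j : ℝ) - (νk.1.1 : ℝ)) * (1 / u - 1 / p)) *
      (∑' m : {m : Fin d → ℤ // cubeSub d j νk.1.1 m νk.1.2},
        ((‖lam m.1‖₊ : ℝ≥0∞)) ^ p) ^ (1 / p)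

/-- The `ℓ_q^{2^{jd}}` quasi-norm (`0 < q < ∞`) on level-`j` coefficients. -/
def lqNorm (d : ℕ) (q : ℝ) (j : ℕ) (lam : (Fin d → ℤ) → ℂ) : ℝ≥0∞ :=
  (∑' m : {m : Fin d → ℤ // inUnitCube d j m}, ((‖lam m.1‖₊ : ℝ≥0∞)) ^ q) ^ (1 / q)

/-- The quasi-norm of the sequence space `ñ^σ_{u,p,q}(Q)`, `q ∈ (0,∞]`. -/
def nNorm (d : ℕ) (σ u p : ℝ) (q : ℝ≥0∞) (lam : ℕ → (Fin d → ℤ) → ℂ) : ℝ≥0∞ :=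
  if q = ∞ then
    ⨆ j : ℕ, (2 : ℝ≥0∞) ^ ((j : ℝ) * (σ - d / u)) * mNorm d u p j (lam j)
  else
    (∑' j : ℕ, ((2 : ℝ≥0∞) ^ ((j : ℝ) * (σ - d / u)) * mNorm d u p j (lam j)) ^ q.toReal) ^
      (1 / q.toReal)

/-- `k`-th entropy number of the identity map between two quasi-norms on one ambient group:
the infimum of all `ε > 0` such that the `N₁`-unit ball is covered by `2^(k-1)` `N₂`-balls of
radius `ε`. -/
def entropyNumber {Λ : Type*} [AddCommGroup Λ] (N₁ N₂ : Λ → ℝ≥0∞) (k : ℕ) : ℝ≥0∞ :=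
  sInf {ε : ℝ≥0∞ | 0 < ε ∧ ∃ c : Fin (2 ^ (k - 1)) → Λ,
    ∀ x : Λ, N₁ x ≤ 1 → ∃ i, N₂ (x - c i) ≤ ε}

/-- Operator quasi-norm of the identity map between two quasi-norms on one ambient space:
the smallest `C` with `N₂ x ≤ C · N₁ x` for all `x`. -/
def opNorm {Λ : Type*} (N₁ N₂ : Λ → ℝ≥0∞) : ℝ≥0∞ :=
  sInf {C : ℝ≥0∞ | ∀ x, N₂ x ≤ C * N₁ x}

end

/-!
Round the coefficients of level `j` to a grid of step `2 ^ (1 + τ - j * σ₁)`. The rounding error is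
at most twice the minimum of the coefficient and the step; interpolating between these two bounds,
with `p₁ / u₁ ≤ p₂ / u₂` making the largest cube the worst one, gives a weighted error
`≲ 2 ^ ((1 - p₁ / p₂) * τ - j * (σ₁ - σ₂))`. The rounded arrays are integer points of an `ℓ_p₁`-ball
in dimension `N = 2 * 2 ^ (j * d)`. An exponential moment bounds their number by
`exp (C * N * T ^ θ)`, where `T = 2 ^ (-p₁ * τ)` and `θ ∈ (0, 1)` is arbitrary.

Now fix a level `J` and let `τ = α * (j - J)` for `j ≥ J` and `τ = β * (j - J)` for `j < J`, where
`d / p₁ < α < (σ₁ - σ₂) / (1 - p₁ / p₂) < β`; such an `α` exists by the hypothesis on `σ₁ - σ₂`.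
Taking `θ` close to `1` above `J` and close to `0` below it, both the logarithm of the number of
arrays and the error decay geometrically away from `J`, starting from `2 ^ (J * d)` and
`2 ^ (-J * (σ₁ - σ₂))` respectively. Choosing `2 ^ (J * d)` proportional to `k` gives the bound.
-/

section LatticePoints

lemma exp_neg_le_mul_rpow_neg {β x : ℝ} (hβ : 0 < β) (hx : 0 < x) :
    Real.exp (-x) ≤ β ^ β * x ^ (-β) := by
  have h : (x / β) ^ β ≤ Real.exp x :=
    calc (x / β) ^ β ≤ Real.exp (x / β) ^ β := by
          gcongr
          linarith [Real.add_one_le_exp (x / β)]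
      _ = Real.exp x := by rw [← Real.exp_mul, div_mul_cancel₀ _ hβ.ne']
  calc Real.exp (-x) = (Real.exp x)⁻¹ := Real.exp_neg x
    _ ≤ ((x / β) ^ β)⁻¹ := by gcongr
    _ = β ^ β * x ^ (-β) := by
      rw [Real.div_rpow hx.le hβ.le, inv_div, Real.rpow_neg hx.le, div_eq_mul_inv]

lemma exp_neg_mul_abs_int_rpow_le {A p β : ℝ} (hA : 0 < A) (hβ : 0 < β) (hpβ : 2 ≤ p * β)
    (z : ℤ) :
    Real.exp (-(A * |(z : ℝ)| ^ p)) ≤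
      (if z = 0 then 1 else 0) + β ^ β * A ^ (-β) * (1 / (z : ℝ) ^ 2) := by
  rcases eq_or_ne z 0 with rfl | hz
  · have hp : p ≠ 0 := by rintro rfl; linarith
    simp [Real.zero_rpow hp]
  have hz1 : 1 ≤ |(z : ℝ)| := by exact_mod_cast Int.one_le_abs hz
  have hz0 : 0 < |(z : ℝ)| := by linarith
  have hdecay : (|(z : ℝ)| ^ p) ^ (-β) ≤ 1 / (z : ℝ) ^ 2 := by
    calc (|(z : ℝ)| ^ p) ^ (-β) = |(z : ℝ)| ^ (-(p * β)) := by
          rw [← Real.rpow_mul hz0.le, mul_neg]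
      _ ≤ |(z : ℝ)| ^ (-2 : ℝ) := Real.rpow_le_rpow_of_exponent_le hz1 (by linarith)
      _ = 1 / (z : ℝ) ^ 2 := by
          rw [Real.rpow_neg hz0.le, Real.rpow_two, sq_abs, one_div]
  rw [if_neg hz, zero_add]
  calc Real.exp (-(A * |(z : ℝ)| ^ p)) ≤ β ^ β * (A * |(z : ℝ)| ^ p) ^ (-β) :=
        exp_neg_le_mul_rpow_neg hβ (by positivity)
    _ = β ^ β * A ^ (-β) * (|(z : ℝ)| ^ p) ^ (-β) := by
        rw [Real.mul_rpow hA.le (by positivity), mul_assoc]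
    _ ≤ β ^ β * A ^ (-β) * (1 / (z : ℝ) ^ 2) := by gcongr

lemma exists_tsum_exp_neg_mul_abs_rpow_le {p γ : ℝ} (hp : 0 < p) (hγ : 0 < γ) :
    ∃ C : ℝ, 0 ≤ C ∧ ∀ A : ℝ, 0 < A →
      Summable (fun z : ℤ ↦ Real.exp (-(A * |(z : ℝ)| ^ p))) ∧
      ∑' z : ℤ, Real.exp (-(A * |(z : ℝ)| ^ p)) ≤ Real.exp (C * A ^ (-γ)) := by
  obtain ⟨n, hn⟩ := exists_nat_gt (2 / (p * γ))
  have hn0 : (0 : ℝ) < n := lt_trans (by positivity) hn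
  have hn' : n ≠ 0 := by exact_mod_cast hn0.ne'
  have hpβ : 2 ≤ p * (n * γ) := by
    rw [div_lt_iff₀ (by positivity)] at hn
    linarith
  set β : ℝ := n * γ with hβ
  have hβ0 : 0 < β := by positivity
  have hsq : Summable (fun z : ℤ ↦ 1 / (z : ℝ) ^ 2) :=
    Real.summable_one_div_int_pow.2 one_lt_two
  set K : ℝ := β ^ β * ∑' z : ℤ, 1 / (z : ℝ) ^ 2 with hK
  have hK0 : 0 ≤ K := mul_nonneg (by positivity) (tsum_nonneg fun z ↦ by positivity)
  refine ⟨n * K ^ (1 / (n : ℝ)), by positivity, fun A hA ↦ ?_⟩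
  have hmaj : HasSum (fun z : ℤ ↦ (if z = 0 then 1 else 0) + β ^ β * A ^ (-β) * (1 / (z : ℝ) ^ 2))
      (1 + β ^ β * A ^ (-β) * ∑' z : ℤ, 1 / (z : ℝ) ^ 2) :=
    (hasSum_ite_eq 0 1).add (hsq.hasSum.mul_left _)
  have hle := exp_neg_mul_abs_int_rpow_le hA hβ0 hpβ
  have hs : Summable (fun z : ℤ ↦ Real.exp (-(A * |(z : ℝ)| ^ p))) :=
    hmaj.summable.of_nonneg_of_le (fun z ↦ by positivity) hle
  refine ⟨hs, ?_⟩
  set y : ℝ := K ^ (1 / (n : ℝ)) * A ^ (-γ) with hy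
  have hyn : y ^ n = K * A ^ (-β) := by
    rw [hy, mul_pow, ← Real.rpow_natCast (K ^ _), ← Real.rpow_mul hK0, one_div_mul_cancel hn0.ne',
      Real.rpow_one, ← Real.rpow_natCast (A ^ _), ← Real.rpow_mul hA.le, hβ]
    ring_nf
  -- `1 + yⁿ ≤ (1 + y)ⁿ` lets a large power `A ^ (-n γ)` be traded for the small power `A ^ (-γ)`
  calc ∑' z : ℤ, Real.exp (-(A * |(z : ℝ)| ^ p))
      ≤ 1 + β ^ β * A ^ (-β) * ∑' z : ℤ, 1 / (z : ℝ) ^ 2 := hasSum_le hle hs.hasSum hmaj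
    _ = 1 ^ n + y ^ n := by rw [hyn, hK, one_pow]; ring
    _ ≤ (1 + y) ^ n := pow_add_pow_le zero_le_one (by positivity) hn'
    _ ≤ Real.exp y ^ n := by
        gcongr
        linarith [Real.add_one_le_exp y]
    _ = Real.exp (n * K ^ (1 / (n : ℝ)) * A ^ (-γ)) := by
        rw [← Real.exp_nat_mul, hy, mul_assoc]

lemma finite_and_ncard_le_of_forall_finset {α : Type*} {s : Set α} {b : ℝ}
    (h : ∀ t : Finset α, (t : Set α) ⊆ s → (t.card : ℝ) ≤ b) :
    s.Finite ∧ (s.ncard : ℝ) ≤ b := by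
  have hs : s.Finite := by
    by_contra hinf
    obtain ⟨n, hn⟩ := exists_nat_gt b
    obtain ⟨t, hts, rfl⟩ := Set.Infinite.exists_subset_card_eq hinf n
    exact (h t hts).not_gt hn
  refine ⟨hs, ?_⟩
  rw [Set.ncard_eq_toFinset_card s hs]
  exact h hs.toFinset (by simp)

lemma ncard_setOf_sum_abs_rpow_le {ι : Type*} [Fintype ι] {p A : ℝ} (hA : 0 ≤ A)
    (hs : Summable (fun z : ℤ ↦ Real.exp (-(A * |(z : ℝ)| ^ p)))) (R : ℝ) :
    {z : ι → ℤ | ∑ i, |(z i : ℝ)| ^ p ≤ R}.Finite ∧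
      ({z : ι → ℤ | ∑ i, |(z i : ℝ)| ^ p ≤ R}.ncard : ℝ) ≤
        Real.exp (A * R) * (∑' z : ℤ, Real.exp (-(A * |(z : ℝ)| ^ p))) ^ Fintype.card ι := by
  classical
  refine finite_and_ncard_le_of_forall_finset fun t ht ↦ ?_
  set w : ℤ → ℝ := fun z ↦ Real.exp (-(A * |(z : ℝ)| ^ p)) with hw
  have hone : ∀ z ∈ t, 1 ≤ Real.exp (A * R) * ∏ i, w (z i) := by
    intro z hz
    have hzR : A * ∑ i, |(z i : ℝ)| ^ p ≤ A * R := mul_le_mul_of_nonneg_left (ht hz) hA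
    rw [hw, ← Real.exp_sum, ← Real.exp_add, Finset.sum_neg_distrib, ← Finset.mul_sum]
    exact Real.one_le_exp (by linarith)
  have hsub : t ⊆ Fintype.piFinset fun i ↦ t.image (· i) := fun z hz ↦
    Fintype.mem_piFinset.2 fun i ↦ Finset.mem_image_of_mem _ hz
  calc (t.card : ℝ) = ∑ z ∈ t, 1 := by simp
    _ ≤ ∑ z ∈ t, Real.exp (A * R) * ∏ i, w (z i) := Finset.sum_le_sum hone
    _ ≤ ∑ z ∈ Fintype.piFinset fun i ↦ t.image (· i), Real.exp (A * R) * ∏ i, w (z i) :=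
        Finset.sum_le_sum_of_subset_of_nonneg hsub fun _ _ _ ↦ by positivity
    _ = Real.exp (A * R) * ∏ i, ∑ z ∈ t.image (· i), w z := by
        rw [← Finset.mul_sum, Finset.prod_univ_sum]
    _ ≤ Real.exp (A * R) * ∏ _i : ι, ∑' z, w z := by
        gcongr with i
        exact hs.sum_le_tsum _ fun z _ ↦ by positivity
    _ = Real.exp (A * R) * (∑' z, w z) ^ Fintype.card ι := by simp

/-- The integer points of the ball `∑ |x i| ^ p ≤ N * T` of `ℝ ^ ι`, where `N` is the number of
coordinates; `T` is thus a bound for the average of the `|x i| ^ p`. -/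
def latticeBall (ι : Type*) [Fintype ι] (p T : ℝ) : Set (ι → ℤ) :=
  {z | ∑ i, |(z i : ℝ)| ^ p ≤ Fintype.card ι * T}

lemma exists_ncard_latticeBall_le {p θ : ℝ} (hp : 0 < p) (hθ0 : 0 < θ) (hθ1 : θ < 1) :
    ∃ C : ℝ, 0 < C ∧ ∀ (ι : Type*) [Fintype ι] (T : ℝ), 0 < T →
      (latticeBall ι p T).Finite ∧
        ((latticeBall ι p T).ncard : ℝ) ≤ Real.exp (C * (Fintype.card ι * T ^ θ)) := by
  have hθ : 0 < 1 - θ := sub_pos.2 hθ1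
  obtain ⟨C, hC, hsum⟩ := exists_tsum_exp_neg_mul_abs_rpow_le hp (div_pos hθ0 hθ)
  refine ⟨1 + C, by positivity, fun ι _ T hT ↦ ?_⟩
  -- this `A` balances `A * T` against `A ^ (-θ / (1 - θ))`
  set A : ℝ := T ^ (θ - 1) with hA
  have hA0 : 0 < A := by positivity
  have hAT : A * T = T ^ θ := by
    rw [hA, ← Real.rpow_add_one hT.ne', sub_add_cancel]
  have hAθ : A ^ (-(θ / (1 - θ))) = T ^ θ := by
    rw [hA, ← Real.rpow_mul hT.le]
    congr 1
    field_simp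
    ring
  obtain ⟨hsummable, htsum⟩ := hsum A hA0
  obtain ⟨hfin, hcard⟩ := ncard_setOf_sum_abs_rpow_le (ι := ι) hA0.le hsummable (Fintype.card ι * T)
  refine ⟨hfin, hcard.trans ?_⟩
  calc Real.exp (A * (Fintype.card ι * T)) *
        (∑' z : ℤ, Real.exp (-(A * |(z : ℝ)| ^ p))) ^ Fintype.card ι
      ≤ Real.exp (A * (Fintype.card ι * T)) *
          Real.exp (C * A ^ (-(θ / (1 - θ)))) ^ Fintype.card ι := by
        gcongr
    _ = Real.exp ((1 + C) * (Fintype.card ι * T ^ θ)) := by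
        rw [← Real.exp_nat_mul, ← Real.exp_add, hAθ, ← hAT]
        ring_nf

end LatticePoints

section EntropyNumbers

lemma entropyNumber_le_of_finite {Λ : Type*} [AddCommGroup Λ] {N₁ N₂ : Λ → ℝ≥0∞} {k : ℕ}
    {ε : ℝ≥0∞} (hε : 0 < ε) {S : Set Λ} (hS : S.Finite) (hcard : S.ncard ≤ 2 ^ (k - 1))
    (hcover : ∀ x, N₁ x ≤ 1 → ∃ c ∈ S, N₂ (x - c) ≤ ε) : entropyNumber N₁ N₂ k ≤ ε := by
  have := hS.fintype
  obtain ⟨e⟩ : Nonempty (S ↪ Fin (2 ^ (k - 1))) := by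
    apply Function.Embedding.nonempty_of_card_le
    rwa [Fintype.card_fin, ← Nat.card_eq_fintype_card]
  refine sInf_le ⟨hε, Function.extend e Subtype.val 0, fun x hx ↦ ?_⟩
  obtain ⟨c, hc, hxc⟩ := hcover x hx
  exact ⟨e ⟨c, hc⟩, by rwa [e.injective.extend_apply]⟩

lemma le_two_pow_pred_of_le_exp_div_four {n k : ℕ} (hk : 0 < k)
    (h : (n : ℝ) ≤ Real.exp (k / 4)) : n ≤ 2 ^ (k - 1) := by
  have hlog := Real.log_two_gt_d9
  obtain ⟨l, rfl⟩ := Nat.exists_eq_succ_of_ne_zero hk.ne'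
  rw [Nat.succ_sub_one]
  rcases Nat.eq_zero_or_pos l with rfl | hl
  · have hlt : (n : ℝ) < 2 := by
      refine h.trans_lt ((Real.lt_log_iff_exp_lt two_pos).1 ?_)
      norm_num
      linarith
    exact Nat.le_of_lt_succ (by exact_mod_cast hlt)
  · have hl1 : (1 : ℝ) ≤ l := by exact_mod_cast hl
    have hle : (n : ℝ) ≤ 2 ^ l := by
      refine h.trans ((Real.le_log_iff_exp_le (by positivity)).1 ?_)
      rw [Real.log_pow]
      push_cast
      nlinarith
    exact_mod_cast hle

lemma finite_univ_pi_and_ncard_le_exp_tsum {ι X : Type*} {G : ι → Set X} {B : ι → ℝ}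
    (hfin : ∀ j, (G j).Finite) (hcard : ∀ j, ((G j).ncard : ℝ) ≤ Real.exp (B j))
    (hB0 : ∀ j, 0 ≤ B j) (hB : Summable B) :
    (Set.univ.pi G).Finite ∧ ((Set.univ.pi G).ncard : ℝ) ≤ Real.exp (∑' j, B j) := by
  classical
  have hlarge : {j | Real.log 2 ≤ B j}.Finite := by
    have := hB.tendsto_cofinite_zero.eventually_lt_const (Real.log_pos one_lt_two)
    simpa [Filter.eventually_cofinite] using this
  have hsub : ∀ j, j ∉ hlarge.toFinset → (G j).Subsingleton := by
    intro j hj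
    have hlt : ((G j).ncard : ℝ) < 2 :=
      (hcard j).trans_lt <| (Real.lt_log_iff_exp_lt two_pos).1 (by simpa using hj)
    have := (hfin j).to_subtype
    have hle : (G j).ncard ≤ 1 := Nat.le_of_lt_succ (by exact_mod_cast hlt)
    exact Set.ncard_le_one_iff_subsingleton.1 hle
  refine finite_and_ncard_le_of_forall_finset fun t ht ↦ ?_
  have hinj : t.card ≤
      (Fintype.piFinset fun j : hlarge.toFinset ↦ (hfin j).toFinset).card := by
    refine Finset.card_le_card_of_injOn (fun g j ↦ g j) (fun g hg ↦ ?_) fun g hg g' hg' hgg' ↦ ?_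
    · simpa using fun j _ ↦ ht hg j trivial
    · funext j
      by_cases hj : j ∈ hlarge.toFinset
      · exact congrFun hgg' ⟨j, hj⟩
      · exact hsub j hj (ht hg j trivial) (ht hg' j trivial)
  calc (t.card : ℝ)
      ≤ ∏ j : hlarge.toFinset, ((G j).ncard : ℝ) := by
        simp_rw [Set.ncard_eq_toFinset_card _ (hfin _)]
        exact_mod_cast hinj.trans_eq (Fintype.card_piFinset _)
    _ = ∏ j ∈ hlarge.toFinset, ((G j).ncard : ℝ) :=
        Finset.prod_coe_sort _ fun j ↦ ((G j).ncard : ℝ)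
    _ ≤ ∏ j ∈ hlarge.toFinset, Real.exp (B j) := Finset.prod_le_prod (by simp) fun j _ ↦ hcard j
    _ = Real.exp (∑ j ∈ hlarge.toFinset, B j) := (Real.exp_sum _ _).symm
    _ ≤ Real.exp (∑' j, B j) := Real.exp_le_exp.2 (hB.sum_le_tsum _ fun j _ ↦ hB0 j)

end EntropyNumbers

section GeometricSums

lemma exists_tsum_rpow_abs_sub_le {r : ℝ} (hr0 : 0 < r) (hr1 : r < 1) :
    ∃ C : ℝ, 0 < C ∧ ∀ J : ℝ, Summable (fun j : ℕ ↦ r ^ |(j : ℝ) - J|) ∧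
      ∑' j : ℕ, r ^ |(j : ℝ) - J| ≤ C := by
  set g : ℤ → ℝ := fun i ↦ r⁻¹ * r ^ |(i : ℝ)| with hg
  have hg0 : ∀ i, 0 < g i := fun i ↦ by positivity
  have hgs : Summable g := by
    have := summable_geometric_of_lt_one hr0.le hr1
    exact Summable.mul_left _ (.of_nat_of_neg (by simpa using this) (by simpa using this))
  refine ⟨∑' i, g i, hgs.tsum_pos (fun i ↦ (hg0 i).le) 0 (hg0 0), fun J ↦ ?_⟩
  have hinj : Function.Injective (fun j : ℕ ↦ (j : ℤ) - ⌊J⌋) := fun a b h ↦ by simpa using h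
  have hle : ∀ j : ℕ, r ^ |(j : ℝ) - J| ≤ g (j - ⌊J⌋) := by
    intro j
    have hfloor : |(j : ℝ) - ⌊J⌋| ≤ |(j : ℝ) - J| + 1 := by
      have hfract : |J - ⌊J⌋| ≤ 1 := by
        rw [Int.self_sub_floor, Int.abs_fract]
        exact (Int.fract_lt_one J).le
      linarith [abs_sub_le (j : ℝ) J ⌊J⌋]
    simp only [hg]
    rw [← Real.rpow_neg_one, ← Real.rpow_add hr0]
    push_cast
    exact Real.rpow_le_rpow_of_exponent_ge hr0 hr1.le (by linarith)
  have hshift : Summable (fun j : ℕ ↦ g (j - ⌊J⌋)) := hgs.comp_injective hinj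
  have hs : Summable (fun j : ℕ ↦ r ^ |(j : ℝ) - J|) :=
    hshift.of_nonneg_of_le (fun j ↦ by positivity) hle
  exact ⟨hs, (hs.tsum_le_tsum hle hshift).trans
    (tsum_comp_le_tsum_of_inj hgs (fun i ↦ (hg0 i).le) hinj)⟩

end GeometricSums

section MorreyNorms

variable {d j : ℕ} {σ u p u₁ p₁ u₂ p₂ : ℝ} {q : ℝ≥0∞} {f g : (Fin d → ℤ) → ℂ}

lemma inUnitCube_of_cubeSub {ν : ℕ} {m k : Fin d → ℤ} (hν : ν ≤ j) (hk : inUnitCube d ν k)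
    (hm : cubeSub d j ν m k) : inUnitCube d j m := by
  intro i
  obtain ⟨hk0, hk1⟩ := hk i
  obtain ⟨hm0, hm1⟩ := hm i
  refine ⟨(by positivity : 0 ≤ k i * 2 ^ (j - ν)).trans hm0, hm1.trans_le ?_⟩
  calc (k i + 1) * 2 ^ (j - ν) ≤ 2 ^ ν * 2 ^ (j - ν) := by gcongr; omega
    _ = 2 ^ j := by rw [← pow_add, Nat.add_sub_of_le hν]

lemma cubeSub_zero_iff_inUnitCube (m : Fin d → ℤ) : cubeSub d j 0 m 0 ↔ inUnitCube d j m := by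
  simp [cubeSub, inUnitCube]

lemma rpow_tsum_cubeSub_le_mNorm {ν : ℕ} {k : Fin d → ℤ} (hν : ν ≤ j) (hk : inUnitCube d ν k) :
    (∑' m : {m // cubeSub d j ν m k}, ‖f m‖ₑ ^ p) ^ (1 / p) ≤
      2 ^ (-(d * (j - ν : ℝ) * (1 / u - 1 / p))) * mNorm d u p j f := by
  rw [ENNReal.rpow_neg, ← ENNReal.div_eq_inv_mul, ENNReal.le_div_iff_mul_le (by simp) (by simp),
    mul_comm]
  exact le_iSup_of_le ⟨(ν, k), hν, hk⟩ le_rfl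

lemma min_rpow_le_mul_rpow_sub {p q : ℝ} (hp : 0 ≤ p) (hpq : p ≤ q) (a b : ℝ≥0∞) :
    min a b ^ q ≤ a ^ p * b ^ (q - p) := by
  have hqp : 0 ≤ q - p := sub_nonneg.2 hpq
  calc min a b ^ q = min a b ^ p * min a b ^ (q - p) := by
        rw [← ENNReal.rpow_add_of_nonneg p (q - p) hp hqp, add_sub_cancel]
    _ ≤ a ^ p * b ^ (q - p) := by
        gcongr
        exacts [min_le_left a b, min_le_right a b]

lemma rpow_tsum_le_of_le_mul_min {ι : Type*} {p q : ℝ} (hp : 0 < p) (hpq : p ≤ q) {c δ : ℝ≥0∞}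
    {a b : ι → ℝ≥0∞} (hb : ∀ i, b i ≤ c * min (a i) δ) :
    (∑' i, b i ^ q) ^ (1 / q) ≤ c * δ ^ (1 - p / q) * ((∑' i, a i ^ p) ^ (1 / p)) ^ (p / q) := by
  have hq : 0 < q := hp.trans_le hpq
  have hsum : ∑' i, b i ^ q ≤ c ^ q * δ ^ (q - p) * ∑' i, a i ^ p := by
    rw [← ENNReal.tsum_mul_left]
    refine ENNReal.tsum_le_tsum fun i ↦ ?_
    calc b i ^ q ≤ (c * min (a i) δ) ^ q := ENNReal.rpow_le_rpow (hb i) hq.le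
      _ = c ^ q * min (a i) δ ^ q := ENNReal.mul_rpow_of_nonneg _ _ hq.le
      _ ≤ c ^ q * (a i ^ p * δ ^ (q - p)) := by
          gcongr
          exact min_rpow_le_mul_rpow_sub hp.le hpq _ _
      _ = c ^ q * δ ^ (q - p) * a i ^ p := by ring
  calc (∑' i, b i ^ q) ^ (1 / q) ≤ (c ^ q * δ ^ (q - p) * ∑' i, a i ^ p) ^ (1 / q) :=
        ENNReal.rpow_le_rpow hsum (by positivity)
    _ = c * δ ^ (1 - p / q) * ((∑' i, a i ^ p) ^ (1 / p)) ^ (p / q) := by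
        rw [ENNReal.mul_rpow_of_nonneg _ _ (by positivity),
          ENNReal.mul_rpow_of_nonneg _ _ (by positivity), ← ENNReal.rpow_mul, ← ENNReal.rpow_mul,
          ← ENNReal.rpow_mul, mul_one_div_cancel hq.ne', ENNReal.rpow_one]
        congr 3 <;> field_simp

lemma mNorm_le_of_enorm_le_two_mul_min (hp₁ : 0 < p₁) (hp : p₁ ≤ p₂) (hu₁ : 0 < u₁) (hu₂ : 0 < u₂)
    (hpu : p₁ / u₁ ≤ p₂ / u₂) {δ : ℝ≥0∞}
    (hg : ∀ m, inUnitCube d j m → ‖g m‖ₑ ≤ 2 * min ‖f m‖ₑ δ) :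
    mNorm d u₂ p₂ j g ≤
      2 * δ ^ (1 - p₁ / p₂) * 2 ^ (d * j * (1 / u₂ - p₁ / (u₁ * p₂))) *
        mNorm d u₁ p₁ j f ^ (p₁ / p₂) := by
  have hp₂ : 0 < p₂ := hp₁.trans_le hp
  have hslope : 0 ≤ 1 / u₂ - p₁ / (u₁ * p₂) := by
    rw [div_le_div_iff₀ hu₁ hu₂] at hpu
    rw [sub_nonneg, div_le_div_iff₀ (by positivity) hu₂]
    linarith
  refine iSup_le fun ⟨⟨ν, k⟩, hν, hk⟩ ↦ ?_
  dsimp only at hν hk ⊢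
  set e : ℝ → ℝ → ℝ := fun u p ↦ d * (j - ν : ℝ) * (1 / u - 1 / p) with he
  have hexp : e u₂ p₂ + -e u₁ p₁ * (p₁ / p₂) ≤ d * j * (1 / u₂ - p₁ / (u₁ * p₂)) :=
    calc e u₂ p₂ + -e u₁ p₁ * (p₁ / p₂) = d * (j - ν) * (1 / u₂ - p₁ / (u₁ * p₂)) := by
          rw [he]; field_simp; ring
      _ ≤ d * j * (1 / u₂ - p₁ / (u₁ * p₂)) := by
          gcongr
          linarith [(Nat.cast_nonneg ν : (0 : ℝ) ≤ ν)]
  have hcube : (∑' m : {m // cubeSub d j ν m k}, ‖g m‖ₑ ^ p₂) ^ (1 / p₂) ≤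
      2 * δ ^ (1 - p₁ / p₂) * (2 ^ (-e u₁ p₁) * mNorm d u₁ p₁ j f) ^ (p₁ / p₂) := by
    refine (rpow_tsum_le_of_le_mul_min (ι := {m // cubeSub d j ν m k}) hp₁ hp
      fun m ↦ hg m.1 (inUnitCube_of_cubeSub hν hk m.2)).trans ?_
    gcongr
    exact rpow_tsum_cubeSub_le_mNorm hν hk
  calc 2 ^ e u₂ p₂ * (∑' m : {m // cubeSub d j ν m k}, ‖g m‖ₑ ^ p₂) ^ (1 / p₂)
      ≤ 2 ^ e u₂ p₂ *
          (2 * δ ^ (1 - p₁ / p₂) * (2 ^ (-e u₁ p₁) * mNorm d u₁ p₁ j f) ^ (p₁ / p₂)) := by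
        gcongr
    _ = 2 * δ ^ (1 - p₁ / p₂) * 2 ^ (e u₂ p₂ + -e u₁ p₁ * (p₁ / p₂)) *
          mNorm d u₁ p₁ j f ^ (p₁ / p₂) := by
        rw [ENNReal.mul_rpow_of_nonneg _ _ (by positivity), ← ENNReal.rpow_mul,
          ENNReal.rpow_add _ _ two_ne_zero ENNReal.ofNat_ne_top]
        ring
    _ ≤ _ := by
        gcongr
        exact one_le_two

lemma rpow_mul_mNorm_le_nNorm (hq : 0 < q) (x : ℕ → (Fin d → ℤ) → ℂ) (j : ℕ) :
    2 ^ (j * (σ - d / u)) * mNorm d u p j (x j) ≤ nNorm d σ u p q x := by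
  unfold nNorm
  split_ifs with hq'
  · exact le_iSup_of_le j le_rfl
  · have hqpos : 0 < q.toReal := ENNReal.toReal_pos hq.ne' hq'
    rw [one_div, ENNReal.le_rpow_inv_iff hqpos]
    exact ENNReal.le_tsum j

lemma exists_nNorm_le_of_geometric (hq : 0 < q) {r : ℝ} (hr0 : 0 < r) (hr1 : r < 1) :
    ∃ D : ℝ, 0 < D ∧ ∀ (d : ℕ) (σ u p J : ℝ) (b : ℝ≥0∞) (x : ℕ → (Fin d → ℤ) → ℂ),
      (∀ j : ℕ, 2 ^ (j * (σ - d / u)) * mNorm d u p j (x j) ≤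
        b * ENNReal.ofReal (r ^ |(j : ℝ) - J|)) →
      nNorm d σ u p q x ≤ ENNReal.ofReal D * b := by
  by_cases hq' : q = ∞
  · refine ⟨1, one_pos, fun d σ u p J b x hx ↦ ?_⟩
    rw [nNorm, if_pos hq', ENNReal.ofReal_one, one_mul]
    refine iSup_le fun j ↦ (hx j).trans (mul_le_of_le_one_right' ?_)
    exact ENNReal.ofReal_le_one.2 (Real.rpow_le_one hr0.le hr1.le (abs_nonneg _))
  · have hqpos : 0 < q.toReal := ENNReal.toReal_pos hq.ne' hq'
    obtain ⟨C, hC, hsum⟩ := exists_tsum_rpow_abs_sub_le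
      (Real.rpow_pos_of_pos hr0 q.toReal) (Real.rpow_lt_one hr0.le hr1 hqpos)
    refine ⟨C ^ (1 / q.toReal), by positivity, fun d σ u p J b x hx ↦ ?_⟩
    rw [nNorm, if_neg hq', one_div, ENNReal.rpow_inv_le_iff hqpos]
    have hlevel : ∀ j : ℕ, (2 ^ (j * (σ - d / u)) * mNorm d u p j (x j)) ^ q.toReal ≤
        b ^ q.toReal * ENNReal.ofReal ((r ^ q.toReal) ^ |(j : ℝ) - J|) := by
      intro j
      refine (ENNReal.rpow_le_rpow (hx j) hqpos.le).trans_eq ?_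
      rw [ENNReal.mul_rpow_of_nonneg _ _ hqpos.le, ENNReal.ofReal_rpow_of_pos (by positivity),
        ← Real.rpow_mul hr0.le, mul_comm _ q.toReal, Real.rpow_mul hr0.le]
    calc _ ≤ ∑' j : ℕ, b ^ q.toReal * ENNReal.ofReal ((r ^ q.toReal) ^ |(j : ℝ) - J|) :=
          ENNReal.tsum_le_tsum hlevel
      _ ≤ b ^ q.toReal * ENNReal.ofReal C := by
          rw [ENNReal.tsum_mul_left,
            ← ENNReal.ofReal_tsum_of_nonneg (fun _ ↦ by positivity) (hsum J).1]
          gcongr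
          exact (hsum J).2
      _ = (ENNReal.ofReal (C ^ (q.toReal)⁻¹) * b) ^ q.toReal := by
          rw [ENNReal.mul_rpow_of_nonneg _ _ hqpos.le, ENNReal.ofReal_rpow_of_pos (by positivity),
            Real.rpow_inv_rpow hC.le hqpos.ne', mul_comm]

end MorreyNorms

section Quantization

/-- The finite set of those `m ∈ ℤ ^ d` with `Q_{j,m} ⊆ Q`. -/
noncomputable def cubeIndices (d j : ℕ) : Finset (Fin d → ℤ) :=
  Fintype.piFinset fun _ ↦ Finset.Ico 0 (2 ^ j)

/-- The array of level-`j` coefficients on the grid `δ (ℤ + i ℤ)` with prescribed integer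
coordinates; `false` stands for real and `true` for imaginary parts. -/
noncomputable def gridArray (d j : ℕ) (δ : ℝ) (z : cubeIndices d j × Bool → ℤ)
    (m : Fin d → ℤ) : ℂ :=
  if h : m ∈ cubeIndices d j then
    δ * (z (⟨m, h⟩, false) + z (⟨m, h⟩, true) * Complex.I)
  else 0

/-- The integer coordinates (see `gridArray`) of the level-`j` coefficients `f` rounded to the grid
`δ (ℤ + i ℤ)`. -/
noncomputable def gridRound (d j : ℕ) (δ : ℝ) (f : (Fin d → ℤ) → ℂ)
    (i : cubeIndices d j × Bool) : ℤ :=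
  round (if i.2 then (f i.1 / δ).im else (f i.1 / δ).re)

variable {d j : ℕ} {σ σ₁ σ₂ u p u₁ p₁ u₂ p₂ δ : ℝ} {f : (Fin d → ℤ) → ℂ}

lemma mem_cubeIndices {m : Fin d → ℤ} : m ∈ cubeIndices d j ↔ inUnitCube d j m := by
  simp [cubeIndices, inUnitCube]

lemma card_cubeIndices (d j : ℕ) : (cubeIndices d j).card = 2 ^ (j * d) := by
  have hpow : ((2 : ℤ) ^ j).toNat = 2 ^ j := by
    rw [← Nat.cast_ofNat, ← Nat.cast_pow, Int.toNat_natCast]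
  simp [cubeIndices, hpow, pow_mul]

lemma abs_round_le (x : ℝ) : |(round x : ℝ)| ≤ 2 * |x| := by
  have h := round_le x 0
  have := abs_sub_abs_le_abs_sub (round x : ℝ) x
  rw [Int.cast_zero, sub_zero] at h
  rw [abs_sub_comm] at this
  linarith

lemma norm_sub_round_add_round_mul_I_le (w : ℂ) :
    ‖w - (round w.re + round w.im * Complex.I)‖ ≤ 2 * min ‖w‖ 1 := by
  have hround : ∀ x : ℝ, |x| ≤ ‖w‖ → |x - round x| ≤ min ‖w‖ 1 := fun x hx ↦
    le_min ((by simpa using round_le x 0 : |x - round x| ≤ |x|).trans hx)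
      ((abs_sub_round x).trans (by norm_num))
  calc ‖w - (round w.re + round w.im * Complex.I)‖
      ≤ |w.re - round w.re| + |w.im - round w.im| := by
        simpa using Complex.norm_le_abs_re_add_abs_im (w - (round w.re + round w.im * Complex.I))
    _ ≤ 2 * min ‖w‖ 1 := by
        linarith [hround _ (Complex.abs_re_le_norm w), hround _ (Complex.abs_im_le_norm w)]

lemma abs_gridRound_le (hδ : 0 < δ) (i : cubeIndices d j × Bool) :
    |(gridRound d j δ f i : ℝ)| ≤ 2 / δ * ‖f i.1‖ := by
  have hpart : |if i.2 then (f i.1 / δ).im else (f i.1 / δ).re| ≤ ‖f i.1 / δ‖ := by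
    split_ifs
    exacts [Complex.abs_im_le_norm _, Complex.abs_re_le_norm _]
  calc |(gridRound d j δ f i : ℝ)| ≤ 2 * ‖f i.1 / δ‖ := (abs_round_le _).trans (by gcongr)
    _ = 2 / δ * ‖f i.1‖ := by
      rw [norm_div, Complex.norm_real, Real.norm_of_nonneg hδ.le]
      ring

lemma sum_abs_gridRound_rpow_le (hδ : 0 < δ) (hp : 0 ≤ p) :
    ∑ i, |(gridRound d j δ f i : ℝ)| ^ p ≤
      2 * (2 / δ) ^ p * ∑ m ∈ cubeIndices d j, ‖f m‖ ^ p :=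
  calc ∑ i, |(gridRound d j δ f i : ℝ)| ^ p
      ≤ ∑ i : cubeIndices d j × Bool, (2 / δ * ‖f i.1‖) ^ p := by
        gcongr with i
        exact abs_gridRound_le hδ i
    _ = ∑ m : cubeIndices d j, 2 * ((2 / δ) ^ p * ‖f m‖ ^ p) := by
        rw [Fintype.sum_prod_type]
        simp [Real.mul_rpow (div_nonneg two_pos.le hδ.le), two_mul]
    _ = 2 * (2 / δ) ^ p * ∑ m ∈ cubeIndices d j, ‖f m‖ ^ p := by
        rw [Finset.sum_coe_sort _ fun m ↦ 2 * ((2 / δ) ^ p * ‖f m‖ ^ p), Finset.mul_sum]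
        simp only [mul_assoc]

lemma enorm_sub_gridArray_gridRound_le (hδ : 0 < δ) {m : Fin d → ℤ} (hm : inUnitCube d j m) :
    ‖(f - gridArray d j δ (gridRound d j δ f)) m‖ₑ ≤ 2 * min ‖f m‖ₑ (ENNReal.ofReal δ) := by
  have hδ' : (δ : ℂ) ≠ 0 := by exact_mod_cast hδ.ne'
  set w : ℂ := f m / δ with hw
  have hfw : f m = δ * w := by rw [hw, mul_div_cancel₀ _ hδ']
  have hgrid : (f - gridArray d j δ (gridRound d j δ f)) m =
      δ * (w - (round w.re + round w.im * Complex.I)) := by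
    rw [Pi.sub_apply, gridArray, dif_pos (mem_cubeIndices.2 hm), hfw, mul_sub]
    simp [gridRound, hw]
  have hnorm : ‖(f - gridArray d j δ (gridRound d j δ f)) m‖ ≤ 2 * min ‖f m‖ δ :=
    calc ‖(f - gridArray d j δ (gridRound d j δ f)) m‖
        = δ * ‖w - (round w.re + round w.im * Complex.I)‖ := by
          rw [hgrid, norm_mul, Complex.norm_real, Real.norm_of_nonneg hδ.le]
      _ ≤ δ * (2 * min ‖w‖ 1) := by
          gcongr
          exact norm_sub_round_add_round_mul_I_le w
      _ = 2 * min ‖f m‖ δ := by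
          rw [hfw, norm_mul, Complex.norm_real, Real.norm_of_nonneg hδ.le, mul_left_comm,
            mul_min_of_nonneg _ _ hδ.le, mul_one]
  have := ENNReal.ofReal_le_ofReal hnorm
  rwa [ENNReal.ofReal_mul two_pos.le, ENNReal.ofReal_min, ofReal_norm, ofReal_norm,
    ENNReal.ofReal_ofNat] at this

lemma two_rpow_eq_ofReal (t : ℝ) : (2 : ℝ≥0∞) ^ t = ENNReal.ofReal (2 ^ t) := by
  rw [← ENNReal.ofReal_rpow_of_pos two_pos, ENNReal.ofReal_ofNat]

lemma le_two_rpow_neg_of_two_rpow_mul_le_one {a : ℝ} {y : ℝ≥0∞} (h : 2 ^ a * y ≤ 1) :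
    y ≤ 2 ^ (-a) := by
  rwa [ENNReal.rpow_neg, ← one_div, ENNReal.le_div_iff_mul_le (by simp) (by simp), mul_comm]

lemma sum_norm_rpow_le_of_mNorm_le {a : ℝ} (hp : 0 < p) (hf : mNorm d u p j f ≤ 2 ^ (-a)) :
    ∑ m ∈ cubeIndices d j, ‖f m‖ ^ p ≤ 2 ^ (-(p * (a + d * j * (1 / u - 1 / p)))) := by
  have hunit : ∀ m, m ∈ cubeIndices d j ↔ cubeSub d j 0 m 0 := fun m ↦
    mem_cubeIndices.trans (cubeSub_zero_iff_inUnitCube m).symm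
  have hsum : ENNReal.ofReal (∑ m ∈ cubeIndices d j, ‖f m‖ ^ p) =
      ∑' m : {m // cubeSub d j 0 m 0}, ‖f m‖ₑ ^ p := by
    rw [ENNReal.ofReal_sum_of_nonneg fun _ _ ↦ by positivity,
      ← Finset.tsum_subtype (cubeIndices d j) fun m ↦ ENNReal.ofReal (‖f m‖ ^ p),
      ← Equiv.tsum_eq (Equiv.subtypeEquivRight hunit)]
    simp [← ENNReal.ofReal_rpow_of_nonneg (norm_nonneg _) hp.le, ofReal_norm]
  have hcube := rpow_tsum_cubeSub_le_mNorm (f := f) (u := u) (p := p) (Nat.zero_le j)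
    (show inUnitCube d 0 0 from fun i ↦ by simp)
  rw [← hsum, one_div p, ENNReal.rpow_inv_le_iff hp, ← one_div] at hcube
  refine (ENNReal.ofReal_le_ofReal_iff (by positivity)).1 ?_
  calc ENNReal.ofReal (∑ m ∈ cubeIndices d j, ‖f m‖ ^ p)
      ≤ (2 ^ (-(d * (j - (0 : ℕ) : ℝ) * (1 / u - 1 / p))) * 2 ^ (-a)) ^ p :=
        hcube.trans (by gcongr)
    _ = ENNReal.ofReal (2 ^ (-(p * (a + d * j * (1 / u - 1 / p))))) := by
        rw [← ENNReal.rpow_add _ _ two_ne_zero ENNReal.ofNat_ne_top, ← ENNReal.rpow_mul,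
          two_rpow_eq_ofReal]
        push_cast
        ring_nf

lemma gridRound_mem_latticeBall (hδ : 0 < δ) (hp : 0 < p)
    (hf : 2 ^ (j * (σ - d / u)) * mNorm d u p j f ≤ 1) :
    gridRound d j δ f ∈
      latticeBall (cubeIndices d j × Bool) p ((2 / δ) ^ p * 2 ^ (-(p * (j * σ)))) := by
  have hsum := sum_norm_rpow_le_of_mNorm_le hp (le_two_rpow_neg_of_two_rpow_mul_le_one hf)
  have hexp : -(p * (j * (σ - d / u) + d * j * (1 / u - 1 / p))) =
      (j * d : ℕ) + -(p * (j * σ)) := by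
    push_cast
    field_simp
    ring
  calc ∑ i, |(gridRound d j δ f i : ℝ)| ^ p
      ≤ 2 * (2 / δ) ^ p * ∑ m ∈ cubeIndices d j, ‖f m‖ ^ p := sum_abs_gridRound_rpow_le hδ hp.le
    _ ≤ 2 * (2 / δ) ^ p * 2 ^ (-(p * (j * (σ - d / u) + d * j * (1 / u - 1 / p)))) := by gcongr
    _ = Fintype.card (cubeIndices d j × Bool) * ((2 / δ) ^ p * 2 ^ (-(p * (j * σ)))) := by
        rw [hexp, Real.rpow_add two_pos, Real.rpow_natCast, Fintype.card_prod, Fintype.card_coe,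
          card_cubeIndices, Fintype.card_bool]
        push_cast
        ring

lemma rpow_mul_mNorm_sub_gridArray_gridRound_le (hδ : 0 < δ) (hp₁ : 0 < p₁) (hp : p₁ ≤ p₂)
    (hu₁ : 0 < u₁) (hu₂ : 0 < u₂) (hpu : p₁ / u₁ ≤ p₂ / u₂)
    (hf : 2 ^ (j * (σ₁ - d / u₁)) * mNorm d u₁ p₁ j f ≤ 1) :
    2 ^ (j * (σ₂ - d / u₂)) * mNorm d u₂ p₂ j (f - gridArray d j δ (gridRound d j δ f)) ≤
      ENNReal.ofReal (2 * δ ^ (1 - p₁ / p₂) * 2 ^ (j * (σ₂ - σ₁ * (p₁ / p₂)))) := by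
  have hp₂ : 0 < p₂ := hp₁.trans_le hp
  set κ : ℝ := 1 - p₁ / p₂
  have hexp : j * (σ₂ - d / u₂) +
      (d * j * (1 / u₂ - p₁ / (u₁ * p₂)) + -(j * (σ₁ - d / u₁)) * (p₁ / p₂)) =
        j * (σ₂ - σ₁ * (p₁ / p₂)) := by
    field_simp
    ring
  have hnorm := mNorm_le_of_enorm_le_two_mul_min hp₁ hp hu₁ hu₂ hpu
    (g := f - gridArray d j δ (gridRound d j δ f))
    fun m hm ↦ enorm_sub_gridArray_gridRound_le hδ hm
  calc _ ≤ 2 ^ (j * (σ₂ - d / u₂)) * (2 * ENNReal.ofReal δ ^ κ *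
          2 ^ (d * j * (1 / u₂ - p₁ / (u₁ * p₂))) *
          (2 ^ (-(j * (σ₁ - d / u₁)))) ^ (p₁ / p₂)) := by
        refine mul_le_mul_right (hnorm.trans ?_) _
        gcongr
        exact le_two_rpow_neg_of_two_rpow_mul_le_one hf
    _ = 2 * ENNReal.ofReal δ ^ κ * 2 ^ (j * (σ₂ - σ₁ * (p₁ / p₂))) := by
        rw [← ENNReal.rpow_mul, ← hexp, ENNReal.rpow_add _ _ two_ne_zero ENNReal.ofNat_ne_top,
          ENNReal.rpow_add _ _ two_ne_zero ENNReal.ofNat_ne_top]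
        ring
    _ = ENNReal.ofReal (2 * δ ^ κ * 2 ^ (j * (σ₂ - σ₁ * (p₁ / p₂)))) := by
        rw [two_rpow_eq_ofReal, ENNReal.ofReal_rpow_of_pos hδ, ENNReal.ofReal_mul (by positivity),
          ENNReal.ofReal_mul two_pos.le, ENNReal.ofReal_ofNat]

end Quantization

section Allocation

lemma exists_quantization_profile {D p κ s : ℝ} (hD : 0 < D) (hp : 0 < p) (hκ : 0 < κ)
    (hs : D * κ < p * s) :
    ∃ (τ : ℝ → ℝ) (θ₁ θ₂ η : ℝ), (0 < θ₁ ∧ θ₁ < 1) ∧ (0 < θ₂ ∧ θ₂ < 1) ∧ 0 < η ∧ ∀ x,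
      κ * τ x - s * x ≤ -(η * |x|) ∧
        (D * x - p * τ x * θ₁ ≤ -(η * |x|) ∨ D * x - p * τ x * θ₂ ≤ -(η * |x|)) := by
  obtain ⟨α, hDα, hαs⟩ : ∃ α, D / p < α ∧ α < s / κ := exists_between <| by
    rw [div_lt_div_iff₀ hp hκ]
    linarith
  obtain ⟨β, hsβ⟩ := exists_gt (s / κ)
  have hα : 0 < α := (div_pos hD hp).trans hDα
  have hβ : 0 < β := hα.trans (hαs.trans hsβ)
  rw [div_lt_iff₀ hp] at hDα
  rw [lt_div_iff₀ hκ] at hαs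
  rw [div_lt_iff₀ hκ] at hsβ
  obtain ⟨θ₁, hDθ₁, hθ₁⟩ : ∃ θ, D / (α * p) < θ ∧ θ < 1 :=
    exists_between ((div_lt_one (by positivity)).2 hDα)
  obtain ⟨θ₂, hθ₂, hθ₂'⟩ : ∃ θ, 0 < θ ∧ θ < min 1 (D / (β * p)) :=
    exists_between (lt_min one_pos (by positivity))
  obtain ⟨hθ₂1, hDθ₂⟩ := lt_min_iff.1 hθ₂'
  have hθ₁0 : 0 < θ₁ := (by positivity : 0 < D / (α * p)).trans hDθ₁
  rw [div_lt_iff₀ (by positivity)] at hDθ₁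
  rw [lt_div_iff₀ (by positivity)] at hDθ₂
  obtain ⟨η, hη, hη'⟩ : ∃ η, 0 < η ∧
      η < min (min (s - α * κ) (β * κ - s)) (min (θ₁ * (α * p) - D) (D - θ₂ * (β * p))) :=
    exists_between <| by simp only [lt_min_iff, sub_pos]; exact ⟨⟨hαs, hsβ⟩, hDθ₁, hDθ₂⟩
  simp only [lt_min_iff] at hη'
  obtain ⟨⟨h₁, h₂⟩, h₃, h₄⟩ := hη'
  refine ⟨fun x ↦ if 0 ≤ x then α * x else β * x, θ₁, θ₂, η, ⟨hθ₁0, hθ₁⟩, ⟨hθ₂, hθ₂1⟩, hη,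
    fun x ↦ ?_⟩
  dsimp only
  split_ifs with hx
  · rw [abs_of_nonneg hx]
    exact ⟨by nlinarith, .inl (by nlinarith)⟩
  · rw [abs_of_neg (not_le.1 hx)]
    exact ⟨by nlinarith, .inr (by nlinarith)⟩

variable {d : ℕ} {σ₁ σ₂ u₁ p₁ u₂ p₂ : ℝ}

lemma exists_level_net (hp₁ : 0 < p₁) (hp : p₁ ≤ p₂) (hu₁ : 0 < u₁) (hu₂ : 0 < u₂)
    (hpu : p₁ / u₁ ≤ p₂ / u₂) {θ : ℝ} (hθ0 : 0 < θ) (hθ1 : θ < 1) :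
    ∃ C : ℝ, 0 < C ∧ ∀ (j : ℕ) (τ : ℝ), ∃ G : Set ((Fin d → ℤ) → ℂ),
      (G.Finite ∧ (G.ncard : ℝ) ≤ Real.exp (C * 2 ^ (j * d - p₁ * τ * θ))) ∧
      ∀ f, 2 ^ (j * (σ₁ - d / u₁)) * mNorm d u₁ p₁ j f ≤ 1 → ∃ g ∈ G,
        2 ^ (j * (σ₂ - d / u₂)) * mNorm d u₂ p₂ j (f - g) ≤
          ENNReal.ofReal (4 * 2 ^ ((1 - p₁ / p₂) * τ - j * (σ₁ - σ₂))) := by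
  obtain ⟨C, hC, hball⟩ := exists_ncard_latticeBall_le hp₁ hθ0 hθ1
  refine ⟨2 * C, by positivity, fun j τ ↦ ?_⟩
  set δ : ℝ := 2 ^ (1 + τ - j * σ₁) with hδ
  have hδ0 : 0 < δ := by positivity
  have hradius : (2 / δ) ^ p₁ * 2 ^ (-(p₁ * (j * σ₁))) = (2 : ℝ) ^ (-(p₁ * τ)) := by
    nth_rewrite 1 [hδ, ← Real.rpow_one 2]
    rw [← Real.rpow_sub two_pos, ← Real.rpow_mul two_pos.le, ← Real.rpow_add two_pos]
    ring_nf
  have herror : 2 * δ ^ (1 - p₁ / p₂) * 2 ^ (j * (σ₂ - σ₁ * (p₁ / p₂))) ≤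
      4 * 2 ^ ((1 - p₁ / p₂) * τ - j * (σ₁ - σ₂)) := by
    have hκ : 0 ≤ p₁ / p₂ := div_nonneg hp₁.le (hp₁.le.trans hp)
    calc 2 * δ ^ (1 - p₁ / p₂) * 2 ^ (j * (σ₂ - σ₁ * (p₁ / p₂)))
        = 2 * 2 ^ (1 - p₁ / p₂) * 2 ^ ((1 - p₁ / p₂) * τ - j * (σ₁ - σ₂)) := by
          rw [hδ, ← Real.rpow_mul two_pos.le, mul_assoc, mul_assoc, ← Real.rpow_add two_pos,
            ← Real.rpow_add two_pos]
          ring_nf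
      _ ≤ 2 * 2 ^ (1 : ℝ) * 2 ^ ((1 - p₁ / p₂) * τ - j * (σ₁ - σ₂)) := by
          gcongr
          exacts [one_le_two, sub_le_self _ hκ]
      _ = 4 * 2 ^ ((1 - p₁ / p₂) * τ - j * (σ₁ - σ₂)) := by
          norm_num
  obtain ⟨hfin, hcard⟩ := hball (cubeIndices d j × Bool) (2 ^ (-(p₁ * τ))) (by positivity)
  refine ⟨gridArray d j δ '' latticeBall _ p₁ (2 ^ (-(p₁ * τ))), ⟨hfin.image _, ?_⟩,
    fun f hf ↦ ⟨_, Set.mem_image_of_mem _ (hradius ▸ gridRound_mem_latticeBall hδ0 hp₁ hf), ?_⟩⟩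
  · calc ((gridArray d j δ '' latticeBall _ p₁ (2 ^ (-(p₁ * τ)))).ncard : ℝ)
        ≤ (latticeBall (cubeIndices d j × Bool) p₁ (2 ^ (-(p₁ * τ)))).ncard := by
          exact_mod_cast Set.ncard_image_le hfin
      _ ≤ _ := hcard
      _ = Real.exp (2 * C * 2 ^ (j * d - p₁ * τ * θ)) := by
          rw [Fintype.card_prod, Fintype.card_coe, card_cubeIndices, Fintype.card_bool,
            ← Real.rpow_mul two_pos.le, sub_eq_add_neg, Real.rpow_add two_pos, ← Nat.cast_mul,
            Real.rpow_natCast]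
          push_cast
          ring_nf
  · exact (rpow_mul_mNorm_sub_gridArray_gridRound_le hδ0 hp₁ hp hu₁ hu₂ hpu hf).trans
      (ENNReal.ofReal_le_ofReal herror)

lemma exists_geometric_nets (hd : 0 < d) (hp₁ : 0 < p₁) (hp : p₁ < p₂) (hu₁ : 0 < u₁)
    (hu₂ : 0 < u₂) (hpu : p₁ / u₁ ≤ p₂ / u₂) (hσ : 1 / p₁ - 1 / p₂ < (σ₁ - σ₂) / d) :
    ∃ K r : ℝ, 0 < K ∧ 0 < r ∧ r < 1 ∧ ∀ (J : ℝ) (j : ℕ), ∃ G : Set ((Fin d → ℤ) → ℂ),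
      (G.Finite ∧ (G.ncard : ℝ) ≤ Real.exp (K * 2 ^ (J * d) * r ^ |(j : ℝ) - J|)) ∧
      ∀ f, 2 ^ (j * (σ₁ - d / u₁)) * mNorm d u₁ p₁ j f ≤ 1 → ∃ g ∈ G,
        2 ^ (j * (σ₂ - d / u₂)) * mNorm d u₂ p₂ j (f - g) ≤
          ENNReal.ofReal (4 * 2 ^ (-(J * (σ₁ - σ₂))) * r ^ |(j : ℝ) - J|) := by
  have hd' : (0 : ℝ) < d := by exact_mod_cast hd
  have hp₂ : 0 < p₂ := hp₁.trans hp
  have hκ : 0 < 1 - p₁ / p₂ := sub_pos.2 ((div_lt_one hp₂).2 hp)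
  have hκσ : d * (1 - p₁ / p₂) < p₁ * (σ₁ - σ₂) := by
    rw [lt_div_iff₀ hd'] at hσ
    calc d * (1 - p₁ / p₂) = p₁ * ((1 / p₁ - 1 / p₂) * d) := by field_simp
      _ < p₁ * (σ₁ - σ₂) := by gcongr
  obtain ⟨τ, θ₁, θ₂, η, hθ₁, hθ₂, hη, hτ⟩ :=
    exists_quantization_profile hd' hp₁ hκ hκσ
  obtain ⟨C₁, hC₁, hnet₁⟩ := exists_level_net (d := d) (σ₁ := σ₁) (σ₂ := σ₂) hp₁ hp.le hu₁ hu₂ hpu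
    hθ₁.1 hθ₁.2
  obtain ⟨C₂, -, hnet₂⟩ := exists_level_net (d := d) (σ₁ := σ₁) (σ₂ := σ₂) hp₁ hp.le hu₁ hu₂ hpu
    hθ₂.1 hθ₂.2
  refine ⟨max C₁ C₂, 2 ^ (-η), lt_max_of_lt_left hC₁, by positivity,
    Real.rpow_lt_one_of_one_lt_of_neg one_lt_two (neg_lt_zero.2 hη), fun J j ↦ ?_⟩
  have hr (a x : ℝ) : 2 ^ a * ((2 : ℝ) ^ (-η)) ^ x = 2 ^ (a - η * x) := by
    rw [← Real.rpow_mul two_pos.le, ← Real.rpow_add two_pos, neg_mul, sub_eq_add_neg]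
  simp only [mul_assoc, hr]
  obtain ⟨hτerror, hτcard⟩ := hτ (j - J)
  have hcard {C θ : ℝ} (hC : C ≤ max C₁ C₂)
      (hθ : d * (j - J) - p₁ * τ (j - J) * θ ≤ -(η * |(j : ℝ) - J|)) :
      Real.exp (C * 2 ^ (j * d - p₁ * τ (j - J) * θ)) ≤
        Real.exp (max C₁ C₂ * 2 ^ (J * d - η * |(j : ℝ) - J|)) := by
    refine Real.exp_le_exp.2 (mul_le_mul hC ?_ (by positivity) (by positivity))
    exact Real.rpow_le_rpow_of_exponent_le one_le_two (by linarith)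
  have herror : ENNReal.ofReal (4 * 2 ^ ((1 - p₁ / p₂) * τ (j - J) - j * (σ₁ - σ₂))) ≤
      ENNReal.ofReal (4 * 2 ^ (-(J * (σ₁ - σ₂)) - η * |(j : ℝ) - J|)) := by
    refine ENNReal.ofReal_le_ofReal (mul_le_mul_of_nonneg_left ?_ (by norm_num))
    exact Real.rpow_le_rpow_of_exponent_le one_le_two (by linarith)
  rcases hτcard with hθ | hθ
  · obtain ⟨G, ⟨hfin, hG⟩, hcover⟩ := hnet₁ j (τ (j - J))
    exact ⟨G, ⟨hfin, hG.trans (hcard (le_max_left _ _) hθ)⟩, fun f hf ↦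
      (hcover f hf).imp fun g ↦ .imp_right (·.trans herror)⟩
  · obtain ⟨G, ⟨hfin, hG⟩, hcover⟩ := hnet₂ j (τ (j - J))
    exact ⟨G, ⟨hfin, hG.trans (hcard (le_max_right _ _) hθ)⟩, fun f hf ↦
      (hcover f hf).imp fun g ↦ .imp_right (·.trans herror)⟩

end Allocation

section MainTheorem

variable {d : ℕ} {σ₁ σ₂ u₁ p₁ u₂ p₂ : ℝ} {q₁ q₂ : ℝ≥0∞}

lemma exists_entropyNumber_le_two_rpow (hd : 0 < d) (hq₁ : 0 < q₁) (hq₂ : 0 < q₂) (hp₁ : 0 < p₁)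
    (hp : p₁ < p₂) (hu₁ : 0 < u₁) (hu₂ : 0 < u₂) (hpu : p₁ / u₁ ≤ p₂ / u₂)
    (hσ : 1 / p₁ - 1 / p₂ < (σ₁ - σ₂) / d) :
    ∃ K D : ℝ, 0 < K ∧ 0 < D ∧ ∀ (J : ℝ) (k : ℕ), 0 < k → K * 2 ^ (J * d) ≤ k →
      entropyNumber (nNorm d σ₁ u₁ p₁ q₁) (nNorm d σ₂ u₂ p₂ q₂) k ≤
        ENNReal.ofReal (D * 2 ^ (-(J * (σ₁ - σ₂)))) := by
  obtain ⟨K, r, hK, hr0, hr1, hnets⟩ := exists_geometric_nets hd hp₁ hp hu₁ hu₂ hpu hσ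
  obtain ⟨C, hC, hsum⟩ := exists_tsum_rpow_abs_sub_le hr0 hr1
  obtain ⟨D, hD, hnorm⟩ := exists_nNorm_le_of_geometric hq₂ hr0 hr1
  refine ⟨4 * (K * C), D * 4, by positivity, by positivity, fun J k hk hJk ↦ ?_⟩
  choose G hG hcover using hnets J
  obtain ⟨hsummable, htsum⟩ := hsum J
  obtain ⟨hfin, hcard⟩ := finite_univ_pi_and_ncard_le_exp_tsum (fun j ↦ (hG j).1)
    (fun j ↦ (hG j).2) (fun j ↦ by positivity) (hsummable.mul_left _)
  have hbudget : ∑' j : ℕ, K * 2 ^ (J * d) * r ^ |(j : ℝ) - J| ≤ k / 4 := by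
    rw [tsum_mul_left]
    calc K * 2 ^ (J * d) * ∑' j : ℕ, r ^ |(j : ℝ) - J| ≤ K * 2 ^ (J * d) * C := by gcongr
      _ ≤ k / 4 := by linarith
  refine entropyNumber_le_of_finite (by simp only [ENNReal.ofReal_pos]; positivity) hfin
    (le_two_pow_pred_of_le_exp_div_four hk (hcard.trans (Real.exp_le_exp.2 hbudget)))
    fun x hx ↦ ?_
  choose g hgG hg using fun j ↦
    hcover j (x j) ((rpow_mul_mNorm_le_nNorm hq₁ x j).trans hx)
  refine ⟨g, fun j _ ↦ hgG j, ?_⟩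
  rw [mul_assoc, ENNReal.ofReal_mul hD.le]
  exact hnorm d σ₂ u₂ p₂ J _ (x - g) fun j ↦
    (hg j).trans_eq (ENNReal.ofReal_mul (by positivity))

end MainTheorem

theorem stmt5_general (d : ℕ) (hd : 1 ≤ d) (σ1 σ2 u1 p1 u2 p2 : ℝ) (q1 q2 : ℝ≥0∞)
    (hq1 : 0 < q1) (hq2 : 0 < q2) (hp1 : 0 < p1) (hu1 : 0 < u1) (hu2 : 0 < u2)
    (h1 : p1 < p2) (h2 : p1 / u1 ≤ p2 / u2)
    (h3 : (σ1 - σ2) / d > 1 / p1 - 1 / p2) :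
    ∃ c : ℝ, 0 < c ∧ ∀ k : ℕ, 0 < k →
      entropyNumber (nNorm d σ1 u1 p1 q1) (nNorm d σ2 u2 p2 q2) k ≤
        ENNReal.ofReal (c * (k : ℝ) ^ (-(σ1 - σ2) / d)) := by
  obtain ⟨K, D, hK, hD, hentropy⟩ :=
    exists_entropyNumber_le_two_rpow hd hq1 hq2 hp1 h1 hu1 hu2 h2 h3
  refine ⟨D * K ^ ((σ1 - σ2) / d), by positivity, fun k hk ↦ ?_⟩
  have hd0 : (0 : ℝ) < d := by exact_mod_cast hd
  have hk0 : (0 : ℝ) < k := by exact_mod_cast hk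
  set J : ℝ := Real.logb 2 (k / K) / d with hJ
  have hJd : (2 : ℝ) ^ (J * d) = k / K := by
    rw [hJ, div_mul_cancel₀ _ hd0.ne', Real.rpow_logb two_pos (by norm_num) (by positivity)]
  have hJσ : (2 : ℝ) ^ (-(J * (σ1 - σ2))) = K ^ ((σ1 - σ2) / d) * k ^ (-(σ1 - σ2) / d) :=
    calc (2 : ℝ) ^ (-(J * (σ1 - σ2))) = (2 ^ (J * d)) ^ (-(σ1 - σ2) / d) := by
          rw [← Real.rpow_mul two_pos.le]
          field_simp
      _ = K ^ ((σ1 - σ2) / d) * k ^ (-(σ1 - σ2) / d) := by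
          rw [hJd, Real.div_rpow hk0.le hK.le, neg_div, Real.rpow_neg hK.le, div_inv_eq_mul,
            mul_comm]
  rw [mul_assoc, ← hJσ]
  exact hentropy J k hk (by rw [hJd, mul_div_cancel₀ _ hK.ne'])

theorem stmt5 (d : ℕ) (hd : 1 ≤ d) (σ1 σ2 u1 p1 u2 p2 : ℝ) (q1 q2 : ℝ≥0∞)
    (hq1 : 0 < q1) (hq2 : 0 < q2)
    (hp1 : 0 < p1) (hp1u1 : p1 ≤ u1) (hp2 : 0 < p2) (hp2u2 : p2 ≤ u2)
    (h1 : p1 < p2) (h2 : p1 / u1 < p2 / u2)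
    (h3 : (σ1 - σ2) / d > 1 / p1 - 1 / p2) :
    ∃ c : ℝ, 0 < c ∧ ∀ k : ℕ, 0 < k →
      entropyNumber (nNorm d σ1 u1 p1 q1) (nNorm d σ2 u2 p2 q2) k ≤
        ENNReal.ofReal (c * (k : ℝ) ^ (-(σ1 - σ2) / d)) :=
  stmt5_general d hd σ1 σ2 u1 p1 u2 p2 q1 q2 hq1 hq2 hp1 (hp1.trans_le hp1u1)
    (hp2.trans_le hp2u2) h1 h2.le h3
end

section
/- Let d ≥ 1 be an integer and 0 < p_i ≤ u_i < ∞ for i = 1, 2, with p1 < p2 and p1/u1 < p2/u2. Then there exists a constant c > 0 such that for all j ∈ ℕ and all k ∈ ℕ: e_{2k−1}(id_j) ≤ c · 2^{jd(1/u2 − p1/(p2·u1))} · 2^{jd(1/p1 − 1/u1)(1 − p1/p2)} · A_{j,k}, where A_{j,k} = 1 if 1 ≤ k ≤ log(2^{jd+1}); A_{j,k} = (k^{−1} · log(1 + 2^{jd}/k))^{1/p1 − 1/p2} if log(2^{jd+1}) ≤ k ≤ 2^{jd+1}; and A_{j,k} = 2^{−k/2^{jd}} · 2^{−jd(1/p1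 − 1/p2)} if k ≥ 2^{jd+1}. -/
open scoped ENNReal NNReal

/-!
Approximate a point of the `ℓ_p` ball on a scaled Gaussian lattice, rounding each coordinate towards
zero. The rounding error is bounded by a multiple of the mesh size in sup norm and, being dominated
by the point itself, it stays in the unit ball of the Morrey space, whose norm is solid. The number
of lattice points needed is bounded by the exponential Chebyshev inequality with the series
`∑ exp (-t |a| ^ p)` as generating function; choosing the mesh according to `k` gives at most
`2 ^ (2k - 2)` points. It remains to measure the error in the target space: for `k ≤ 2 ^ (jd + 1)`
its Morrey norm is interpolated between the source norm and the sup norm, and for larger `k` the sup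
norm suffices.
-/

namespace MorreyEntropy

section LatticeTheta

variable {p t : ℝ}

/-- The theta-type series `∑ exp (-t |a| ^ p)` over `a ∈ ℤ`: the generating function which, through
the exponential Chebyshev inequality, counts the lattice points of an `ℓ_p` ball. -/
noncomputable def latticeTheta (p t : ℝ) : ℝ := ∑' a : ℤ, Real.exp (-t * |(a : ℝ)| ^ p)

lemma latticeTheta_nonneg (p t : ℝ) : 0 ≤ latticeTheta p t :=
  tsum_nonneg fun _ ↦ (Real.exp_pos _).le

lemma sum_range_exp_neg_mul_rpow_le (hp : 0 < p) (ht : 0 < t) (n : ℕ) :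
    ∑ i ∈ Finset.range n, Real.exp (-t * ((i : ℝ) + 1) ^ p) ≤
      t ^ (-1 / p) * Real.Gamma (1 / p + 1) := by
  have anti : AntitoneOn (fun x : ℝ ↦ Real.exp (-t * x ^ p)) (Set.Icc 0 (0 + n)) := by
    intro x hx y _ hxy
    have : x ^ p ≤ y ^ p := Real.rpow_le_rpow hx.1 hxy hp.le
    exact Real.exp_le_exp.2 (by nlinarith)
  have integrable : MeasureTheory.IntegrableOn (fun x : ℝ ↦ Real.exp (-t * x ^ p)) (Set.Ioi 0) := by
    simpa using integrableOn_rpow_mul_exp_neg_mul_rpow (s := 0) (by norm_num) hp ht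
  calc ∑ i ∈ Finset.range n, Real.exp (-t * ((i : ℝ) + 1) ^ p)
      ≤ ∫ x in (0 : ℝ)..0 + n, Real.exp (-t * x ^ p) := by simpa using anti.sum_le_integral
    _ = ∫ x in Set.Ioc (0 : ℝ) n, Real.exp (-t * x ^ p) := by
        rw [zero_add, intervalIntegral.integral_of_le n.cast_nonneg]
    _ ≤ ∫ x in Set.Ioi (0 : ℝ), Real.exp (-t * x ^ p) :=
        MeasureTheory.setIntegral_mono_set integrable (.of_forall fun _ ↦ (Real.exp_pos _).le)
          Set.Ioc_subset_Ioi_self.eventuallyLE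
    _ = t ^ (-1 / p) * Real.Gamma (1 / p + 1) := integral_exp_neg_mul_rpow hp ht

lemma hasSum_latticeTheta (hp : 0 < p) (ht : 0 < t) :
    HasSum (fun a : ℤ ↦ Real.exp (-t * |(a : ℝ)| ^ p))
      (1 + 2 * ∑' n : ℕ, Real.exp (-t * ((n : ℝ) + 1) ^ p)) := by
  have half : HasSum (fun n : ℕ ↦ Real.exp (-t * ((n : ℝ) + 1) ^ p)) _ :=
    (summable_of_sum_range_le (fun _ ↦ (Real.exp_pos _).le)
      (sum_range_exp_neg_mul_rpow_le hp ht)).hasSum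
  have abs_succ (n : ℕ) : |(n : ℝ) + 1| = n + 1 := abs_of_pos (by positivity)
  have abs_neg_succ (n : ℕ) : |-1 + -(n : ℝ)| = n + 1 := by
    rw [← neg_add, abs_neg, add_comm, abs_succ]
  convert HasSum.of_add_one_of_neg_add_one (f := fun a : ℤ ↦ Real.exp (-t * |(a : ℝ)| ^ p))
    (by simpa [abs_succ] using half) (by simpa [abs_neg_succ] using half) using 1
  simp only [neg_mul, Int.cast_zero, abs_zero, Real.zero_rpow hp.ne', mul_zero,
    Real.exp_zero]
  ring

lemma sum_le_latticeTheta (hp : 0 < p) (ht : 0 < t) (s : Finset ℤ) :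
    ∑ a ∈ s, Real.exp (-t * |(a : ℝ)| ^ p) ≤ latticeTheta p t :=
  (hasSum_latticeTheta hp ht).summable.sum_le_tsum s fun _ _ ↦ (Real.exp_pos _).le

lemma latticeTheta_le_one_add_rpow (hp : 0 < p) (ht : 0 < t) :
    latticeTheta p t ≤ 1 + 2 * Real.Gamma (1 / p + 1) * t ^ (-1 / p) := by
  have := Real.tsum_le_of_sum_range_le (fun _ ↦ (Real.exp_pos _).le)
    (sum_range_exp_neg_mul_rpow_le hp ht)
  rw [latticeTheta, (hasSum_latticeTheta hp ht).tsum_eq]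
  linarith

lemma latticeTheta_le_one_add_exp (hp : 0 < p) (ht : 1 ≤ t) :
    latticeTheta p t ≤ 1 + 2 * Real.Gamma (1 / p + 1) * Real.exp (1 - t) := by
  have partial_sum_le (n : ℕ) : ∑ i ∈ Finset.range n, Real.exp (-t * ((i : ℝ) + 1) ^ p) ≤
      Real.exp (1 - t) * Real.Gamma (1 / p + 1) := calc
    _ ≤ ∑ i ∈ Finset.range n, Real.exp (1 - t) * Real.exp (-1 * ((i : ℝ) + 1) ^ p) := by
        refine Finset.sum_le_sum fun i _ ↦ ?_
        have : 1 ≤ ((i : ℝ) + 1) ^ p := Real.one_le_rpow (by simp) hp.le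
        rw [← Real.exp_add]
        exact Real.exp_le_exp.2 (by nlinarith)
    _ ≤ Real.exp (1 - t) * Real.Gamma (1 / p + 1) := by
        rw [← Finset.mul_sum]
        gcongr
        simpa using sum_range_exp_neg_mul_rpow_le hp one_pos n
  have := Real.tsum_le_of_sum_range_le (fun _ ↦ (Real.exp_pos _).le) partial_sum_le
  rw [latticeTheta, (hasSum_latticeTheta hp (by linarith)).tsum_eq]
  linarith

end LatticeTheta

section DominatedNet

variable {ι : Type*} [Fintype ι] {p r δ t ε : ℝ}

lemma card_filter_sum_le_exp_mul_pow [DecidableEq ι] {α : Type*} (s : Finset α) (w : α → ℝ)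
    (ht : 0 ≤ t) (b : ℝ) :
    (((Fintype.piFinset fun _ : ι ↦ s).filter fun z ↦ ∑ i, w (z i) ≤ b).card : ℝ) ≤
      Real.exp (t * b) * (∑ a ∈ s, Real.exp (-t * w a)) ^ Fintype.card ι := by
  set box := Fintype.piFinset fun _ : ι ↦ s
  calc ((box.filter fun z ↦ ∑ i, w (z i) ≤ b).card : ℝ)
      = ∑ z ∈ box with ∑ i, w (z i) ≤ b, 1 := by simp
    _ ≤ ∑ z ∈ box with ∑ i, w (z i) ≤ b, Real.exp (t * (b - ∑ i, w (z i))) :=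
        Finset.sum_le_sum fun z hz ↦ Real.one_le_exp
          (mul_nonneg ht (sub_nonneg.2 (Finset.mem_filter.1 hz).2))
    _ ≤ ∑ z ∈ box, Real.exp (t * (b - ∑ i, w (z i))) :=
        Finset.sum_le_sum_of_subset_of_nonneg (Finset.filter_subset _ _)
          fun _ _ _ ↦ (Real.exp_pos _).le
    _ = ∑ z ∈ box, Real.exp (t * b) * ∏ i, Real.exp (-t * w (z i)) := by
        refine Finset.sum_congr rfl fun z _ ↦ ?_
        rw [← Real.exp_sum, ← Real.exp_add, ← Finset.mul_sum]
        ring_nf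
    _ = Real.exp (t * b) * (∑ a ∈ s, Real.exp (-t * w a)) ^ Fintype.card ι := by
        rw [← Finset.mul_sum, ← Finset.prod_univ_sum (fun _ ↦ s) fun _ a ↦ Real.exp (-t * w a),
          Finset.prod_const, Finset.card_univ]

lemma exists_int_abs_sub_le (x : ℝ) : ∃ a : ℤ, |(a : ℝ)| ≤ |x| ∧ |x - a| ≤ min |x| 1 := by
  wlog hx : 0 ≤ x generalizing x
  · obtain ⟨a, ha, hxa⟩ := this (-x) (by linarith)
    refine ⟨-a, by simpa using ha, ?_⟩
    rwa [abs_neg, ← abs_neg, neg_sub, sub_neg_eq_add, add_comm, ← sub_neg_eq_add,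
      ← Int.cast_neg] at hxa
  · have floor_nonneg : (0 : ℝ) ≤ ⌊x⌋ := by exact_mod_cast Int.floor_nonneg.2 hx
    refine ⟨⌊x⌋, ?_, ?_⟩
    · rw [abs_of_nonneg floor_nonneg, abs_of_nonneg hx]
      exact Int.floor_le x
    · rw [Int.self_sub_floor, abs_of_nonneg (Int.fract_nonneg x), abs_of_nonneg hx]
      exact le_min (by linarith [Int.self_sub_floor x]) (Int.fract_lt_one x).le

lemma exists_int_abs_sub_mul_le (hδ : 0 < δ) (x : ℝ) :
    ∃ a : ℤ, |(a : ℝ)| ≤ |x| / δ ∧ |x - δ * a| ≤ min |x| δ := by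
  obtain ⟨a, ha, hxa⟩ := exists_int_abs_sub_le (x / δ)
  have abs_div_eq : |x / δ| = |x| / δ := by rw [abs_div, abs_of_pos hδ]
  refine ⟨a, ha.trans_eq abs_div_eq, ?_⟩
  calc |x - δ * a| = δ * |x / δ - a| := by
        rw [← abs_of_pos hδ, ← abs_mul, abs_of_pos hδ, mul_sub, mul_div_cancel₀ _ hδ.ne']
    _ ≤ δ * min (|x| / δ) 1 := by gcongr; rwa [← abs_div_eq]
    _ = min |x| δ := by
        rw [mul_min_of_nonneg _ _ hδ.le, mul_div_cancel₀ _ hδ.ne', mul_one]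

/-- The point `δ (a + b i)` of the scaled Gaussian lattice, for `z = (a, b)`. -/
def gaussianPoint (δ : ℝ) (z : ℤ × ℤ) : ℂ := ⟨δ * z.1, δ * z.2⟩

lemma exists_norm_sub_gaussianPoint_le (hδ : 0 < δ) (x : ℂ) :
    ∃ z : ℤ × ℤ, |(z.1 : ℝ)| ≤ ‖x‖ / δ ∧ |(z.2 : ℝ)| ≤ ‖x‖ / δ ∧
      ‖x - gaussianPoint δ z‖ ≤ min ‖x‖ (2 * δ) := by
  obtain ⟨a, ha, hxa⟩ := exists_int_abs_sub_mul_le hδ x.re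
  obtain ⟨b, hb, hxb⟩ := exists_int_abs_sub_mul_le hδ x.im
  obtain ⟨hxa₁, hxa₂⟩ := le_min_iff.1 hxa
  obtain ⟨hxb₁, hxb₂⟩ := le_min_iff.1 hxb
  refine ⟨(a, b), ha.trans (by gcongr; exact x.abs_re_le_norm),
    hb.trans (by gcongr; exact x.abs_im_le_norm), le_min ?_ ?_⟩
  · rw [Complex.norm_def, Complex.norm_def]
    refine Real.sqrt_le_sqrt ?_
    simp only [Complex.normSq_apply, Complex.sub_re, Complex.sub_im, gaussianPoint]
    nlinarith [sq_le_sq.2 hxa₁, sq_le_sq.2 hxb₁]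
  · refine (Complex.norm_le_abs_re_add_abs_im _).trans ?_
    simp only [Complex.sub_re, Complex.sub_im, gaussianPoint]
    linarith

/-- `T` is a dominated `ε`-net of the `ℓ_p` ball of radius `r` in `ℂ^ι`: every point `x` of the ball
has an approximant in `T` whose error is, in each coordinate, at most `ε` and also at most `|x i|`.
The domination keeps the error in every solid set containing the ball. -/
def IsDominatedNet (p r ε : ℝ) (T : Finset (ι → ℂ)) : Prop :=
  ∀ x : ι → ℂ, ∑ i, ‖x i‖ ^ p ≤ r ^ p → ∃ y ∈ T, ∀ i, ‖x i - y i‖ ≤ min ‖x i‖ ε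

lemma IsDominatedNet.mono {T : Finset (ι → ℂ)} (h : IsDominatedNet p r δ T) (hδε : δ ≤ ε) :
    IsDominatedNet p r ε T := fun x hx ↦
  (h x hx).imp fun _ ⟨hy, hxy⟩ ↦ ⟨hy, fun i ↦ (hxy i).trans (min_le_min_left _ hδε)⟩

lemma isDominatedNet_singleton_zero (hp : 0 < p) (hr : 0 ≤ r) :
    IsDominatedNet p r r ({0} : Finset (ι → ℂ)) := by
  refine fun x hx ↦ ⟨0, Finset.mem_singleton_self 0, fun i ↦ ?_⟩
  have : ‖x i‖ ^ p ≤ r ^ p := (Finset.single_le_sum (f := fun i ↦ ‖x i‖ ^ p)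
    (fun _ _ ↦ by positivity) (Finset.mem_univ i)).trans hx
  simpa using (Real.rpow_le_rpow_iff (norm_nonneg _) hr hp).1 this

lemma card_filter_sum_rpow_le_latticeTheta_pow [DecidableEq ι] (hp : 0 < p) (ht : 0 < t)
    (J : Finset ℤ) (b : ℝ) :
    (((Fintype.piFinset fun _ : ι ↦ J ×ˢ J).filter fun z ↦
        ∑ i, (|((z i).1 : ℝ)| ^ p + |((z i).2 : ℝ)| ^ p) ≤ b).card : ℝ) ≤
      Real.exp (t * b) * latticeTheta p t ^ (2 * Fintype.card ι) := by
  have sum_eq_sq : ∑ z ∈ J ×ˢ J, Real.exp (-t * (|(z.1 : ℝ)| ^ p + |(z.2 : ℝ)| ^ p)) =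
      (∑ a ∈ J, Real.exp (-t * |(a : ℝ)| ^ p)) ^ 2 := by
    simp only [sq, Finset.sum_mul_sum, Finset.sum_product, mul_add, Real.exp_add]
  refine (card_filter_sum_le_exp_mul_pow (J ×ˢ J) (fun z ↦ |(z.1 : ℝ)| ^ p + |(z.2 : ℝ)| ^ p)
    ht.le b).trans ?_
  rw [sum_eq_sq, ← pow_mul]
  gcongr
  exact sum_le_latticeTheta hp ht J

lemma exists_isDominatedNet_card_le (hp : 0 < p) (hr : 0 ≤ r) (hδ : 0 < δ) (ht : 0 < t) :
    ∃ T : Finset (ι → ℂ), IsDominatedNet p r (2 * δ) T ∧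
      (T.card : ℝ) ≤ Real.exp (2 * t * (r / δ) ^ p) * latticeTheta p t ^ (2 * Fintype.card ι) := by
  classical
  obtain ⟨L, hL⟩ := exists_nat_ge (r / δ)
  set J := Finset.Icc (-(L : ℤ)) L with hJ
  let G := (Fintype.piFinset fun _ : ι ↦ J ×ˢ J).filter fun z ↦
    ∑ i, (|((z i).1 : ℝ)| ^ p + |((z i).2 : ℝ)| ^ p) ≤ 2 * (r / δ) ^ p
  refine ⟨G.image fun z i ↦ gaussianPoint δ (z i), fun x hx ↦ ?_, ?_⟩
  · choose z hz₁ hz₂ hxz using fun i ↦ exists_norm_sub_gaussianPoint_le hδ (x i)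
    refine ⟨_, Finset.mem_image_of_mem _ (Finset.mem_filter.2 ⟨?_, ?_⟩), hxz⟩
    · have norm_le (i : ι) : ‖x i‖ ≤ r := by
        obtain ⟨y, hy, h⟩ := isDominatedNet_singleton_zero hp hr x hx
        simpa [Finset.mem_singleton.1 hy] using h i
      have mem_J (a : ℤ) (i : ι) (ha : |(a : ℝ)| ≤ ‖x i‖ / δ) : a ∈ J := by
        have : |(a : ℝ)| ≤ L := ha.trans ((by gcongr; exact norm_le i : _ ≤ r / δ).trans hL)
        rw [hJ, Finset.mem_Icc, ← abs_le]
        exact_mod_cast this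
      simpa using fun i ↦ ⟨mem_J _ i (hz₁ i), mem_J _ i (hz₂ i)⟩
    · calc ∑ i, (|((z i).1 : ℝ)| ^ p + |((z i).2 : ℝ)| ^ p)
          ≤ ∑ i, ((‖x i‖ / δ) ^ p + (‖x i‖ / δ) ^ p) := by
            gcongr with i
            exacts [hz₁ i, hz₂ i]
        _ = 2 * ((∑ i, ‖x i‖ ^ p) / δ ^ p) := by
            simp only [Real.div_rpow (norm_nonneg _) hδ.le, ← two_mul, ← Finset.mul_sum,
              Finset.sum_div]
        _ ≤ 2 * (r / δ) ^ p := by rw [Real.div_rpow hr hδ.le]; gcongr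
  · rw [mul_comm 2 t, mul_assoc]
    exact (Nat.cast_le.2 Finset.card_image_le).trans
      (card_filter_sum_rpow_le_latticeTheta_pow hp ht J _)

end DominatedNet

section NetCardinality

universe u

lemma one_third_le_log_one_add_div {x y : ℝ} (hy : 0 < y) (h : y ≤ 2 * x) :
    1 / 3 ≤ Real.log (1 + x / y) := by
  have half_le : 1 / 2 ≤ x / y := by rw [div_le_div_iff₀ two_pos hy]; linarith
  calc (1 : ℝ) / 3 = 1 - (3 / 2)⁻¹ := by norm_num
    _ ≤ 1 - (1 + x / y)⁻¹ := by gcongr; linarith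
    _ ≤ Real.log (1 + x / y) := Real.one_sub_inv_le_log_of_pos (by linarith)

lemma exp_mul_one_add_pow_le_two_pow {s a : ℝ} {N k : ℕ} (hk : 2 ≤ k) (ha : 0 ≤ a)
    (hs : s ≤ k / 4) (hNa : 2 * N * a ≤ k / 4) :
    Real.exp s * (1 + a) ^ (2 * N) ≤ 2 ^ (2 * k - 2) := by
  calc Real.exp s * (1 + a) ^ (2 * N) ≤ Real.exp s * Real.exp a ^ (2 * N) := by
        gcongr
        rw [add_comm]
        exact Real.add_one_le_exp a
    _ = Real.exp (s + 2 * N * a) := by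
        rw [← Real.exp_nat_mul, ← Real.exp_add]
        push_cast
        rfl
    _ ≤ Real.exp (k * Real.log 2) := by
        have := Real.log_two_gt_d9
        exact Real.exp_le_exp.2 (by nlinarith)
    _ = 2 ^ k := by rw [Real.exp_nat_mul, Real.exp_log two_pos]
    _ ≤ 2 ^ (2 * k - 2) := pow_le_pow_right₀ one_le_two (by omega)

lemma exp_half_mul_one_add_pow_le_two_pow {N k : ℕ} (hN : 0 < N) (hk : 2 * N ≤ k) :
    Real.exp (N / 2) * (1 + (2 : ℝ) ^ ((k : ℝ) / N) / 12) ^ (2 * N) ≤ 2 ^ (2 * k - 2) := by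
  set y : ℝ := 2 ^ ((k : ℝ) / N) with hy
  have hN' : (0 : ℝ) < N := by exact_mod_cast hN
  have four_le : 4 ≤ y := by
    calc (4 : ℝ) = 2 ^ (2 : ℝ) := by norm_num
      _ ≤ y := Real.rpow_le_rpow_of_exponent_le one_le_two <| by
        rw [le_div_iff₀ hN']
        exact_mod_cast hk
  have y_pow : y ^ (2 * N) = 2 ^ (2 * k) := by
    rw [hy, ← Real.rpow_mul_natCast zero_le_two, ← Real.rpow_natCast]
    congr 1
    push_cast
    field_simp
  have exp_half_le : Real.exp (N / 2) ≤ 2 ^ N := by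
    rw [← Real.exp_log (two_pos (α := ℝ)), ← Real.exp_nat_mul, Real.exp_log two_pos]
    exact Real.exp_le_exp.2 (by nlinarith [Real.log_two_gt_d9])
  calc Real.exp (N / 2) * (1 + y / 12) ^ (2 * N) ≤ 2 ^ N * (y / 3) ^ (2 * N) := by
        gcongr
        linarith
    _ = (2 / 9) ^ N * 2 ^ (2 * k) := by
        rw [div_pow, y_pow, pow_mul 3, div_pow]
        norm_num
        ring
    _ ≤ (2 / 9) ^ 1 * 2 ^ (2 * k) := by
        gcongr ?_ * _
        exact pow_le_pow_of_le_one (by norm_num) (by norm_num) hN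
    _ ≤ 2⁻¹ ^ 2 * 2 ^ (2 * k) := by
        gcongr ?_ * _
        norm_num
    _ = 2 ^ (2 * k - 2) := by
        rw [pow_sub₀ _ two_ne_zero (by omega), inv_pow, mul_comm]

/-- The shift `1 + 8 A` is chosen so that `A * exp (-8 A) ≤ 1 / 8`. -/
lemma two_mul_mul_exp_one_sub_log_le {A x y : ℝ} (hA : 0 < A) (hx : 0 < x) (hy : 0 < y) :
    2 * x * (A * Real.exp (1 - (Real.log (1 + x / y) + (1 + 8 * A)))) ≤ y / 4 := by
  have exp_eq : Real.exp (1 - (Real.log (1 + x / y) + (1 + 8 * A))) =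
      (1 + x / y)⁻¹ * (Real.exp (8 * A))⁻¹ := by
    rw [← Real.exp_log (show 0 < 1 + x / y by positivity), ← Real.exp_neg, ← Real.exp_neg,
      ← Real.exp_add, Real.exp_log (by positivity)]
    ring_nf
  calc 2 * x * (A * Real.exp (1 - (Real.log (1 + x / y) + (1 + 8 * A))))
      ≤ 2 * x * (A * ((x / y)⁻¹ * (8 * A)⁻¹)) := by
        rw [exp_eq]
        gcongr
        · linarith
        · linarith [Real.add_one_le_exp (8 * A)]
    _ = y / 4 := by
        field_simp
        norm_num

variable {p : ℝ}

lemma exists_isDominatedNet_rpow_card_le {ι : Type*} [Fintype ι] {r s t : ℝ} (hp : 0 < p)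
    (hr : 0 < r) (hs : 0 < s) (ht : 0 < t) :
    ∃ T : Finset (ι → ℂ), IsDominatedNet p r (2 * (r * s ^ (1 / p))) T ∧
      (T.card : ℝ) ≤ Real.exp (2 * t / s) * latticeTheta p t ^ (2 * Fintype.card ι) := by
  have ratio_eq : (r / (r * s ^ (1 / p))) ^ p = s⁻¹ := by
    rw [div_mul_cancel_left₀ hr.ne', Real.inv_rpow (by positivity), ← Real.rpow_mul hs.le,
      one_div_mul_cancel hp.ne', Real.rpow_one]
  simpa only [ratio_eq, ← div_eq_mul_inv] using
    exists_isDominatedNet_card_le (ι := ι) (δ := r * s ^ (1 / p)) hp hr.le (by positivity) ht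

lemma exists_exp_mul_latticeTheta_pow_le_two_pow (hp : 0 < p) :
    ∃ B K : ℝ, 0 < B ∧ 3 ≤ K ∧ ∀ {N k : ℕ}, 2 ≤ k → k ≤ 2 * N →
      Real.exp (2 * (Real.log (1 + N / k) + B) / (K * (Real.log (1 + N / k) / k))) *
        latticeTheta p (Real.log (1 + N / k) + B) ^ (2 * N) ≤ 2 ^ (2 * k - 2) := by
  obtain ⟨A, hA⟩ : ∃ A, A = 2 * Real.Gamma (1 / p + 1) := ⟨_, rfl⟩
  have hA₀ : 0 < A := by rw [hA]; positivity
  obtain ⟨B, hB⟩ : ∃ B, B = 1 + 8 * A := ⟨_, rfl⟩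
  have hB₀ : 0 < B := by linarith
  refine ⟨B, 8 * (1 + 3 * B), hB₀, by linarith, fun {N k} hk hkN ↦ ?_⟩
  have hk₀ : (0 : ℝ) < k := by exact_mod_cast (by omega : 0 < k)
  have hN₀ : (0 : ℝ) < N := by exact_mod_cast (by omega : 0 < N)
  have log_ge := one_third_le_log_one_add_div hk₀ (x := N) (by exact_mod_cast hkN)
  set l := Real.log (1 + N / k)
  have exponent_le : 2 * (l + B) / (8 * (1 + 3 * B) * (l / k)) ≤ k / 4 := by
    rw [div_le_div_iff₀ (by positivity) four_pos,
      show k * (8 * (1 + 3 * B) * (l / k)) = 8 * (1 + 3 * B) * l by field_simp]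
    nlinarith
  have theta_le : latticeTheta p (l + B) ≤ 1 + A * Real.exp (1 - (l + B)) :=
    hA ▸ latticeTheta_le_one_add_exp hp (by linarith)
  have tail_le : 2 * N * (A * Real.exp (1 - (l + B))) ≤ k / 4 :=
    hB ▸ two_mul_mul_exp_one_sub_log_le hA₀ hN₀ hk₀
  refine le_trans ?_ (exp_mul_one_add_pow_le_two_pow hk (by positivity) exponent_le tail_le)
  have := latticeTheta_nonneg p (l + B)
  gcongr

theorem exists_isDominatedNet_of_le (hp : 0 < p) :
    ∃ c : ℝ, 0 < c ∧ ∀ (ι : Type u) [Fintype ι] {r : ℝ}, 0 < r →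
      ∀ {k : ℕ}, 1 ≤ k → k ≤ 2 * Fintype.card ι →
        ∃ T : Finset (ι → ℂ), T.card ≤ 2 ^ (2 * k - 2) ∧
          IsDominatedNet p r (c * r * (Real.log (1 + Fintype.card ι / k) / k) ^ (1 / p)) T := by
  obtain ⟨B, K, hB, hK, card_le⟩ := exists_exp_mul_latticeTheta_pow_le_two_pow hp
  refine ⟨2 * K ^ (1 / p), by positivity, fun ι _ r hr k hk hkN ↦ ?_⟩
  have hk₀ : (0 : ℝ) < k := by exact_mod_cast hk
  have log_ge := one_third_le_log_one_add_div hk₀ (x := Fintype.card ι) (by exact_mod_cast hkN)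
  set l := Real.log (1 + Fintype.card ι / k)
  have radius_eq :
      2 * K ^ (1 / p) * r * (l / k) ^ (1 / p) = 2 * (r * (K * (l / k)) ^ (1 / p)) := by
    rw [Real.mul_rpow (by positivity) (by positivity)]
    ring
  rw [radius_eq]
  obtain rfl | hk₂ := hk.eq_or_lt
  · refine ⟨{0}, by simp, (isDominatedNet_singleton_zero hp hr.le).mono ?_⟩
    have : 1 ≤ (K * (l / (1 : ℕ))) ^ (1 / p) :=
      Real.one_le_rpow (by rw [Nat.cast_one, div_one]; nlinarith) (by positivity)
    nlinarith
  · obtain ⟨T, hT, hcard⟩ := exists_isDominatedNet_rpow_card_le (ι := ι) (s := K * (l / k))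
      (t := l + B) hp hr (by positivity) (by linarith)
    exact ⟨T, by exact_mod_cast hcard.trans (card_le hk₂ hkN), hT⟩

theorem exists_isDominatedNet_of_ge (hp : 0 < p) :
    ∃ c : ℝ, 0 < c ∧ ∀ (ι : Type u) [Fintype ι] [Nonempty ι] {r : ℝ}, 0 < r →
      ∀ {k : ℕ}, 2 * Fintype.card ι ≤ k →
        ∃ T : Finset (ι → ℂ), T.card ≤ 2 ^ (2 * k - 2) ∧
          IsDominatedNet p r (c * r * (Fintype.card ι : ℝ) ^ (-1 / p) *
            2 ^ (-(k : ℝ) / Fintype.card ι)) T := by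
  obtain ⟨A, hA_eq⟩ : ∃ A, A = 2 * Real.Gamma (1 / p + 1) := ⟨_, rfl⟩
  have hA : 0 < A := by rw [hA_eq]; positivity
  refine ⟨2 * (4 ^ (1 / p) * (12 * A)), by positivity, fun ι _ _ r hr k hk ↦ ?_⟩
  set N := Fintype.card ι
  have hN : 0 < N := Fintype.card_pos
  set y : ℝ := 2 ^ ((k : ℝ) / N) with hy
  have hy₀ : 0 < y := by positivity
  -- This weight turns the theta bound into `1 + y / 12`.
  obtain ⟨t, ht⟩ : ∃ t, t = (12 * A / y) ^ p := ⟨_, rfl⟩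
  have ht₀ : 0 < t := by rw [ht]; positivity
  obtain ⟨T, hT, hcard⟩ := exists_isDominatedNet_rpow_card_le (ι := ι) (s := 4 * t / N) hp hr
    (by positivity) ht₀
  have radius_eq : 2 * (r * (4 * t / N) ^ (1 / p)) =
      2 * (4 ^ (1 / p) * (12 * A)) * r * (N : ℝ) ^ (-1 / p) * 2 ^ (-(k : ℝ) / N) := by
    rw [Real.div_rpow (by positivity) (by positivity), Real.mul_rpow four_pos.le ht₀.le, ht,
      ← Real.rpow_mul (by positivity), mul_one_div_cancel hp.ne', Real.rpow_one, neg_div,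
      Real.rpow_neg (by positivity), neg_div, Real.rpow_neg zero_le_two, ← hy]
    ring
  have exponent_eq : 2 * t / (4 * t / N) = N / 2 := by
    field_simp
    norm_num
  have theta_le : latticeTheta p t ≤ 1 + y / 12 := by
    refine (latticeTheta_le_one_add_rpow hp ht₀).trans_eq ?_
    rw [← hA_eq, ht, ← Real.rpow_mul (by positivity), mul_div_cancel₀ _ hp.ne', Real.rpow_neg_one]
    field_simp
  refine ⟨T, ?_, radius_eq ▸ hT⟩
  have : (T.card : ℝ) ≤ 2 ^ (2 * k - 2) := by
    rw [exponent_eq] at hcard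
    refine hcard.trans (le_trans ?_ (exp_half_mul_one_add_pow_le_two_pow hN hk))
    have := latticeTheta_nonneg p t
    gcongr
  exact_mod_cast this

end NetCardinality

section MorreyNorm

variable {d j ν : ℕ} {u p u₁ p₁ u₂ p₂ : ℝ} {k m : Fin d → ℤ} {x y : (Fin d → ℤ) → ℂ}

/-- The indices `m` of the level-`j` dyadic cubes `Q_{j,m}` contained in `Q_{ν,k}`, for `ν ≤ j`.
The unit cube corresponds to `ν = 0`, `k = 0`. -/
noncomputable def subcubes (d j ν : ℕ) (k : Fin d → ℤ) : Finset (Fin d → ℤ) :=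
  Fintype.piFinset fun i ↦ Finset.Ico (k i * 2 ^ (j - ν)) ((k i + 1) * 2 ^ (j - ν))

lemma mem_subcubes : m ∈ subcubes d j ν k ↔ cubeSub d j ν m k := by
  simp [subcubes, cubeSub]

lemma card_subcubes : (subcubes d j ν k).card = 2 ^ ((j - ν) * d) := by
  have length_eq (i : Fin d) :
      (k i + 1) * 2 ^ (j - ν) - k i * 2 ^ (j - ν) = ((2 ^ (j - ν) : ℕ) : ℤ) := by
    push_cast
    ring
  simp only [subcubes, Fintype.card_piFinset, Int.card_Ico, length_eq, Int.toNat_natCast,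
    Finset.prod_const, Finset.card_univ, Fintype.card_fin, pow_mul]

lemma subcubes_subset_subcubes_zero (hν : ν ≤ j) (hk : inUnitCube d ν k) :
    subcubes d j ν k ⊆ subcubes d j 0 0 := by
  simp only [Finset.subset_iff, mem_subcubes]
  intro m hm i
  obtain ⟨k_nonneg, k_lt⟩ := hk i
  obtain ⟨le_m, m_lt⟩ := hm i
  have pow_eq : (2 : ℤ) ^ j = 2 ^ ν * 2 ^ (j - ν) := by rw [← pow_add, Nat.add_sub_cancel' hν]
  have : (k i + 1) * 2 ^ (j - ν) ≤ 2 ^ ν * 2 ^ (j - ν) := by gcongr; omega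
  have : 0 ≤ k i * 2 ^ (j - ν) := by positivity
  simp only [Pi.zero_apply, zero_mul, zero_add, one_mul, Nat.sub_zero, pow_eq]
  omega

lemma two_rpow_eq_ofReal (a : ℝ) : (2 : ℝ≥0∞) ^ a = ENNReal.ofReal (2 ^ a) := by
  rw [← ENNReal.ofReal_rpow_of_pos two_pos, ENNReal.ofReal_ofNat]

lemma mNorm_le_iff (hp : 0 < p) {C : ℝ≥0∞} :
    mNorm d u p j x ≤ C ↔ ∀ ν ≤ j, ∀ k, inUnitCube d ν k →
      ∑ m ∈ subcubes d j ν k, ‖x m‖ₑ ^ p ≤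
        ((2 : ℝ≥0∞) ^ (d * ((j : ℝ) - ν) * (1 / p - 1 / u)) * C) ^ p := by
  have tsum_eq (ν : ℕ) (k : Fin d → ℤ) :
      ∑' m : {m // cubeSub d j ν m k}, (‖x m.1‖₊ : ℝ≥0∞) ^ p =
        ∑ m ∈ subcubes d j ν k, ‖x m‖ₑ ^ p := by
    rw [← Finset.tsum_subtype]
    exact ((Equiv.subtypeEquivRight fun _ ↦ mem_subcubes).tsum_eq _).symm
  have le_iff (a : ℝ) (S : ℝ≥0∞) :
      (2 : ℝ≥0∞) ^ (a * (1 / u - 1 / p)) * S ^ (1 / p) ≤ C ↔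
        S ≤ ((2 : ℝ≥0∞) ^ (a * (1 / p - 1 / u)) * C) ^ p := by
    rw [← neg_sub (1 / u), mul_neg, ENNReal.rpow_neg,
      ENNReal.mul_le_iff_le_inv (by simp) (by simp), one_div p, ENNReal.rpow_inv_le_iff hp]
  simp only [mNorm, iSup_le_iff, Subtype.forall, Prod.forall, and_imp, tsum_eq, le_iff]
  exact forall_congr' fun ν ↦ forall_comm

lemma mNorm_mono (hp : 0 < p) (h : ∀ m ∈ subcubes d j 0 0, ‖y m‖ ≤ ‖x m‖) :
    mNorm d u p j y ≤ mNorm d u p j x :=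
  (mNorm_le_iff hp).2 fun ν hν k hk ↦ le_trans
    (Finset.sum_le_sum fun m hm ↦ ENNReal.rpow_le_rpow
      (enorm_le_iff_norm_le.2 (h m (subcubes_subset_subcubes_zero hν hk hm))) hp.le)
    ((mNorm_le_iff hp).1 le_rfl ν hν k hk)

lemma mNorm_le_rpow_mul_of_enorm_le (hp : 0 < p) (hu : 0 < u) {D : ℝ≥0∞}
    (hD : ∀ m ∈ subcubes d j 0 0, ‖x m‖ₑ ≤ D) :
    mNorm d u p j x ≤ 2 ^ (j * d * (1 / u)) * D := by
  refine (mNorm_le_iff hp).2 fun ν hν k hk ↦ ?_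
  calc ∑ m ∈ subcubes d j ν k, ‖x m‖ₑ ^ p ≤ ∑ _m ∈ subcubes d j ν k, D ^ p := by
        gcongr with m hm
        exact hD m (subcubes_subset_subcubes_zero hν hk hm)
    _ = ((2 : ℝ≥0∞) ^ (d * ((j : ℝ) - ν) * (1 / p)) * D) ^ p := by
        rw [ENNReal.mul_rpow_of_nonneg _ _ hp.le, ← ENNReal.rpow_mul, mul_assoc,
          one_div_mul_cancel hp.ne', mul_one, Finset.sum_const, card_subcubes, nsmul_eq_mul,
          ← Nat.cast_sub hν, mul_comm (d : ℝ)]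
        push_cast
        rw [← ENNReal.rpow_natCast]
        push_cast
        rfl
    _ ≤ (2 ^ (d * ((j : ℝ) - ν) * (1 / p - 1 / u)) * (2 ^ (j * d * (1 / u)) * D)) ^ p := by
        rw [← mul_assoc, ← ENNReal.rpow_add _ _ two_ne_zero ENNReal.ofNat_ne_top]
        have : 0 ≤ d * (ν : ℝ) * (1 / u) := by positivity
        gcongr
        · exact one_le_two
        · linarith

lemma mNorm_le_mNorm_rpow_mul_of_enorm_le (hp₁ : 0 < p₁) (hp : p₁ ≤ p₂)
    (hpu : p₁ / u₁ ≤ p₂ / u₂) {D : ℝ≥0∞} (hD : ∀ m ∈ subcubes d j 0 0, ‖x m‖ₑ ≤ D) :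
    mNorm d u₂ p₂ j x ≤ 2 ^ (j * d * (1 / u₂ - p₁ / (p₂ * u₁))) *
      (mNorm d u₁ p₁ j x ^ (p₁ / p₂) * D ^ (1 - p₁ / p₂)) := by
  have hp₂ : 0 < p₂ := hp₁.trans_le hp
  refine (mNorm_le_iff hp₂).2 fun ν hν k hk ↦ ?_
  set M := mNorm d u₁ p₁ j x
  have exponent_le : d * ((j : ℝ) - ν) * (p₁ / p₂ * (1 / p₁ - 1 / u₁)) ≤
      d * ((j : ℝ) - ν) * (1 / p₂ - 1 / u₂) + j * d * (1 / u₂ - p₁ / (p₂ * u₁)) := by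
    have gap_nonneg : 0 ≤ d * (ν : ℝ) * ((p₂ / u₂ - p₁ / u₁) / p₂) := by
      have := sub_nonneg.2 hpu
      positivity
    refine le_of_sub_nonneg (gap_nonneg.trans_eq ?_)
    field_simp
    ring
  calc ∑ m ∈ subcubes d j ν k, ‖x m‖ₑ ^ p₂
      ≤ ∑ m ∈ subcubes d j ν k, D ^ (p₂ - p₁) * ‖x m‖ₑ ^ p₁ := by
        refine Finset.sum_le_sum fun m hm ↦ ?_
        have := sub_nonneg.2 hp
        rw [← sub_add_cancel p₂ p₁, ENNReal.rpow_add_of_nonneg _ _ this hp₁.le,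
          add_sub_cancel_right]
        gcongr
        exact hD m (subcubes_subset_subcubes_zero hν hk hm)
    _ ≤ D ^ (p₂ - p₁) * (2 ^ (d * ((j : ℝ) - ν) * (1 / p₁ - 1 / u₁)) * M) ^ p₁ := by
        rw [← Finset.mul_sum]
        gcongr
        exact (mNorm_le_iff hp₁).1 le_rfl ν hν k hk
    _ = (2 ^ (d * ((j : ℝ) - ν) * (p₁ / p₂ * (1 / p₁ - 1 / u₁))) *
          (M ^ (p₁ / p₂) * D ^ (1 - p₁ / p₂))) ^ p₂ := by
        simp only [ENNReal.mul_rpow_of_nonneg _ _ hp₁.le, ENNReal.mul_rpow_of_nonneg _ _ hp₂.le,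
          ← ENNReal.rpow_mul, sub_mul, div_mul_cancel₀ _ hp₂.ne', one_mul]
        rw [mul_comm, mul_assoc]
        congr 2
        field_simp
    _ ≤ _ := by
        rw [← mul_assoc (2 ^ (d * ((j : ℝ) - ν) * (1 / p₂ - 1 / u₂))),
          ← ENNReal.rpow_add _ _ two_ne_zero ENNReal.ofNat_ne_top]
        gcongr
        exact one_le_two

lemma sum_norm_rpow_le_of_mNorm_le_one (hp : 0 < p) (hx : mNorm d u p j x ≤ 1) :
    ∑ m ∈ subcubes d j 0 0, ‖x m‖ ^ p ≤ ((2 : ℝ) ^ (j * d * (1 / p - 1 / u))) ^ p := by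
  have sum_le := (mNorm_le_iff hp).1 hx 0 (Nat.zero_le j) 0 fun i ↦ by simp
  rw [← ENNReal.ofReal_le_ofReal_iff (by positivity),
    ENNReal.ofReal_sum_of_nonneg fun _ _ ↦ by positivity,
    ← ENNReal.ofReal_rpow_of_nonneg (by positivity) hp.le, ← two_rpow_eq_ofReal]
  simpa [← ENNReal.ofReal_rpow_of_nonneg, hp.le, mul_comm (d : ℝ)] using sum_le

end MorreyNorm

section EntropyNumbers

variable {d j n : ℕ} {u₁ p₁ u₂ p₂ ε : ℝ}

lemma entropyNumber_le_of_finset {Λ : Type*} [AddCommGroup Λ] {N₁ N₂ : Λ → ℝ≥0∞} {C : ℝ≥0∞}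
    (T : Finset Λ) (hT : T.card ≤ 2 ^ (n - 1))
    (hcover : ∀ x, N₁ x ≤ 1 → ∃ c ∈ T, N₂ (x - c) ≤ C) : entropyNumber N₁ N₂ n ≤ C := by
  refine le_of_forall_gt_imp_ge_of_dense fun C' hC' ↦
    sInf_le ⟨zero_le.trans_lt hC', fun i ↦ T.toList.getD i 0, fun x hx ↦ ?_⟩
  obtain ⟨c, hc, hxc⟩ := hcover x hx
  obtain ⟨i, hi, rfl⟩ := List.getElem_of_mem (Finset.mem_toList.2 hc)
  refine ⟨⟨i, (Finset.length_toList T ▸ hi).trans_le hT⟩, ?_⟩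
  simpa only [List.getD_eq_getElem _ _ hi] using hxc.trans hC'.le

lemma entropyNumber_mNorm_le_of_isDominatedNet {N₂ : ((Fin d → ℤ) → ℂ) → ℝ≥0∞} {C : ℝ≥0∞}
    (hp₁ : 0 < p₁) {T : Finset (subcubes d j 0 0 → ℂ)} (hT : T.card ≤ 2 ^ (n - 1))
    (hnet : IsDominatedNet p₁ (2 ^ (j * d * (1 / p₁ - 1 / u₁))) ε T)
    (hN₂ : ∀ x, mNorm d u₁ p₁ j x ≤ 1 → (∀ m ∈ subcubes d j 0 0, ‖x m‖ₑ ≤ ENNReal.ofReal ε) →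
      N₂ x ≤ C) :
    entropyNumber (mNorm d u₁ p₁ j) N₂ n ≤ C := by
  classical
  refine entropyNumber_le_of_finset (T.image fun y ↦ Function.extend Subtype.val y 0)
    (Finset.card_image_le.trans hT) fun x hx ↦ ?_
  obtain ⟨y, hy, hxy⟩ := hnet (fun m ↦ x m) <|
    (Finset.sum_coe_sort _ fun m ↦ ‖x m‖ ^ p₁).trans_le (sum_norm_rpow_le_of_mNorm_le_one hp₁ hx)
  have error_le (m : Fin d → ℤ) (hm : m ∈ subcubes d j 0 0) :
      ‖(x - Function.extend Subtype.val y 0) m‖ ≤ min ‖x m‖ ε := by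
    rw [Pi.sub_apply, Subtype.val_injective.extend_apply y 0 ⟨m, hm⟩]
    exact hxy ⟨m, hm⟩
  refine ⟨_, Finset.mem_image_of_mem _ hy, hN₂ _ ((mNorm_mono hp₁ fun m hm ↦ ?_).trans hx)
    fun m hm ↦ ?_⟩
  · exact (error_le m hm).trans (min_le_left _ _)
  · rw [← ofReal_norm]
    exact ENNReal.ofReal_le_ofReal ((error_le m hm).trans (min_le_right _ _))

lemma entropyNumber_mNorm_le_interpolation (hp₁ : 0 < p₁) (hp : p₁ ≤ p₂)
    (hpu : p₁ / u₁ ≤ p₂ / u₂) {T : Finset (subcubes d j 0 0 → ℂ)} (hT : T.card ≤ 2 ^ (n - 1))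
    (hnet : IsDominatedNet p₁ (2 ^ (j * d * (1 / p₁ - 1 / u₁))) ε T) :
    entropyNumber (mNorm d u₁ p₁ j) (mNorm d u₂ p₂ j) n ≤
      2 ^ (j * d * (1 / u₂ - p₁ / (p₂ * u₁))) * ENNReal.ofReal ε ^ (1 - p₁ / p₂) := by
  refine entropyNumber_mNorm_le_of_isDominatedNet hp₁ hT hnet fun x hx hxε ↦
    (mNorm_le_mNorm_rpow_mul_of_enorm_le hp₁ hp hpu hxε).trans ?_
  gcongr
  have := hp₁.trans_le hp
  exact mul_le_of_le_one_left' (ENNReal.rpow_le_one hx (by positivity))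

lemma entropyNumber_mNorm_le_sup (hp₁ : 0 < p₁) (hp₂ : 0 < p₂) (hu₂ : 0 < u₂)
    {T : Finset (subcubes d j 0 0 → ℂ)} (hT : T.card ≤ 2 ^ (n - 1))
    (hnet : IsDominatedNet p₁ (2 ^ (j * d * (1 / p₁ - 1 / u₁))) ε T) :
    entropyNumber (mNorm d u₁ p₁ j) (mNorm d u₂ p₂ j) n ≤
      2 ^ (j * d * (1 / u₂)) * ENNReal.ofReal ε :=
  entropyNumber_mNorm_le_of_isDominatedNet hp₁ hT hnet fun _ _ hxε ↦
    mNorm_le_rpow_mul_of_enorm_le hp₂ hu₂ hxε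

theorem entropyNumber_mNorm_le (hp₁ : 0 < p₁) (hp : p₁ ≤ p₂) (hpu : p₁ / u₁ ≤ p₂ / u₂) :
    entropyNumber (mNorm d u₁ p₁ j) (mNorm d u₂ p₂ j) n ≤
      2 ^ (j * d * (1 / u₂ - p₁ / (p₂ * u₁))) *
        2 ^ (j * d * (1 / p₁ - 1 / u₁) * (1 - p₁ / p₂)) := by
  rw [ENNReal.rpow_mul 2 (j * d * (1 / p₁ - 1 / u₁)),
    two_rpow_eq_ofReal (j * d * (1 / p₁ - 1 / u₁))]
  exact entropyNumber_mNorm_le_interpolation hp₁ hp hpu (T := {0}) (by simp [Nat.one_le_two_pow])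
    (isDominatedNet_singleton_zero hp₁ (by positivity))

lemma card_coe_subcubes_zero : Fintype.card (subcubes d j 0 0) = 2 ^ (j * d) := by
  rw [Fintype.card_coe, card_subcubes, Nat.sub_zero]

theorem exists_entropyNumber_mNorm_le_of_le (hp₁ : 0 < p₁) (hp : p₁ ≤ p₂) :
    ∃ c : ℝ, 0 < c ∧ ∀ {d : ℕ} {u₁ u₂ : ℝ}, p₁ / u₁ ≤ p₂ / u₂ → ∀ {j k : ℕ}, 1 ≤ k →
      (k : ℝ) ≤ 2 ^ (j * d + 1) →
        entropyNumber (mNorm d u₁ p₁ j) (mNorm d u₂ p₂ j) (2 * k - 1) ≤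
          ENNReal.ofReal c * (2 ^ (j * d * (1 / u₂ - p₁ / (p₂ * u₁))) *
            2 ^ (j * d * (1 / p₁ - 1 / u₁) * (1 - p₁ / p₂))) *
          ENNReal.ofReal ((Real.log (1 + 2 ^ (j * d) / (k : ℝ)) / (k : ℝ)) ^
            (1 / p₁ - 1 / p₂)) := by
  obtain ⟨c, hc, exists_net⟩ := exists_isDominatedNet_of_le hp₁
  refine ⟨c ^ (1 - p₁ / p₂), by positivity, fun {d u₁ u₂} hpu {j k} hk hk_le ↦ ?_⟩
  obtain ⟨T, hT, hnet⟩ := exists_net (subcubes d j 0 0)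
    (r := 2 ^ (j * d * (1 / p₁ - 1 / u₁))) (by positivity) hk
    (by rw [card_coe_subcubes_zero, ← pow_succ']; exact_mod_cast hk_le)
  refine (entropyNumber_mNorm_le_interpolation hp₁ hp hpu (by rwa [Nat.sub_sub]) hnet).trans_eq ?_
  rw [card_coe_subcubes_zero]
  push_cast
  set q : ℝ := Real.log (1 + 2 ^ (j * d) / (k : ℝ)) / k
  have q_nonneg : 0 ≤ q :=
    div_nonneg (Real.log_nonneg (le_add_of_nonneg_right (by positivity))) k.cast_nonneg
  have θ_nonneg : 0 ≤ 1 - p₁ / p₂ := sub_nonneg.2 (div_le_one_of_le₀ hp (hp₁.trans_le hp).le)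
  have exponent_eq : 1 / p₁ * (1 - p₁ / p₂) = 1 / p₁ - 1 / p₂ := by
    have := (hp₁.trans_le hp).ne'
    field_simp
  rw [ENNReal.ofReal_mul (by positivity), ENNReal.ofReal_mul hc.le,
    ENNReal.mul_rpow_of_nonneg _ _ θ_nonneg, ENNReal.mul_rpow_of_nonneg _ _ θ_nonneg,
    ENNReal.ofReal_rpow_of_pos hc, ← two_rpow_eq_ofReal, ← ENNReal.rpow_mul,
    ENNReal.ofReal_rpow_of_nonneg (by positivity) θ_nonneg, ← Real.rpow_mul q_nonneg, exponent_eq]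
  ring

theorem exists_entropyNumber_mNorm_le_of_ge (hp₁ : 0 < p₁) :
    ∃ c : ℝ, 0 < c ∧ ∀ {d : ℕ} {u₁ u₂ p₂ : ℝ}, 0 < p₂ → 0 < u₂ → ∀ {j k : ℕ},
      (2 : ℝ) ^ (j * d + 1) ≤ k →
        entropyNumber (mNorm d u₁ p₁ j) (mNorm d u₂ p₂ j) (2 * k - 1) ≤
          ENNReal.ofReal c * (2 ^ (j * d * (1 / u₂ - p₁ / (p₂ * u₁))) *
            2 ^ (j * d * (1 / p₁ - 1 / u₁) * (1 - p₁ / p₂))) *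
          (2 ^ (-(k : ℝ) / 2 ^ (j * d)) * 2 ^ (-((j : ℝ) * d) * (1 / p₁ - 1 / p₂))) := by
  obtain ⟨c, hc, exists_net⟩ := exists_isDominatedNet_of_ge hp₁
  refine ⟨c, hc, fun {d u₁ u₂ p₂} hp₂ hu₂ {j k} hk ↦ ?_⟩
  have : Nonempty (subcubes d j 0 0) :=
    Fintype.card_pos_iff.1 (card_coe_subcubes_zero ▸ by positivity)
  obtain ⟨T, hT, hnet⟩ := exists_net (subcubes d j 0 0)
    (r := 2 ^ (j * d * (1 / p₁ - 1 / u₁))) (k := k) (by positivity)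
    (by rw [card_coe_subcubes_zero, ← pow_succ']; exact_mod_cast hk)
  refine (entropyNumber_mNorm_le_sup hp₁ hp₂ hu₂ (by rwa [Nat.sub_sub]) hnet).trans_eq ?_
  rw [card_coe_subcubes_zero]
  have card_rpow_eq : (((2 ^ (j * d) : ℕ) : ℝ)) ^ (-1 / p₁) = 2 ^ (j * d * (-1 / p₁)) := by
    rw [Nat.cast_pow, Nat.cast_ofNat, ← Real.rpow_natCast, ← Real.rpow_mul zero_le_two,
      Nat.cast_mul]
  have exponent_eq : j * d * (1 / u₂) + j * d * (1 / p₁ - 1 / u₁) + j * d * (-1 / p₁) =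
      j * d * (1 / u₂ - p₁ / (p₂ * u₁)) + j * d * (1 / p₁ - 1 / u₁) * (1 - p₁ / p₂) +
        -((j : ℝ) * d) * (1 / p₁ - 1 / p₂) := by
    field_simp
    ring
  have rpow_eq := congrArg ((2 : ℝ≥0∞) ^ ·) exponent_eq
  simp only [ENNReal.rpow_add _ _ two_ne_zero ENNReal.ofNat_ne_top] at rpow_eq
  rw [card_rpow_eq, ENNReal.ofReal_mul (by positivity), ENNReal.ofReal_mul (by positivity),
    ENNReal.ofReal_mul hc.le, ← two_rpow_eq_ofReal, ← two_rpow_eq_ofReal, ← two_rpow_eq_ofReal]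
  push_cast
  calc _ = ENNReal.ofReal c * 2 ^ (-(k : ℝ) / 2 ^ (j * d)) *
        (2 ^ (j * d * (1 / u₂)) * 2 ^ (j * d * (1 / p₁ - 1 / u₁)) * 2 ^ (j * d * (-1 / p₁))) := by
        ring
    _ = _ := by rw [rpow_eq]; ring

end EntropyNumbers

end MorreyEntropy

theorem stmt17_general (p1 p2 : ℝ) (hp1 : 0 < p1) (h : p1 ≤ p2) :
    ∃ c : ℝ, 0 < c ∧ ∀ (d : ℕ) (u1 u2 : ℝ), 0 < u1 → 0 < u2 → p1 / u1 ≤ p2 / u2 →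
      ∀ j k : ℕ, 1 ≤ k →
        (entropyNumber (mNorm d u1 p1 j) (mNorm d u2 p2 j) (2 * k - 1) ≤
            ENNReal.ofReal c * ((2 : ℝ≥0∞) ^ (((j : ℝ) * d) * (1 / u2 - p1 / (p2 * u1))) *
              (2 : ℝ≥0∞) ^ (((j : ℝ) * d) * (1 / p1 - 1 / u1) * (1 - p1 / p2)))) ∧
        ((k : ℝ) ≤ 2 ^ (j * d + 1) →
          entropyNumber (mNorm d u1 p1 j) (mNorm d u2 p2 j) (2 * k - 1) ≤
            ENNReal.ofReal c * ((2 : ℝ≥0∞) ^ (((j : ℝ) * d) * (1 / u2 - p1 / (p2 * u1))) *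
              (2 : ℝ≥0∞) ^ (((j : ℝ) * d) * (1 / p1 - 1 / u1) * (1 - p1 / p2))) *
              ENNReal.ofReal ((Real.log (1 + 2 ^ (j * d) / (k : ℝ)) / (k : ℝ)) ^
                (1 / p1 - 1 / p2))) ∧
        ((2 : ℝ) ^ (j * d + 1) ≤ (k : ℝ) →
          entropyNumber (mNorm d u1 p1 j) (mNorm d u2 p2 j) (2 * k - 1) ≤
            ENNReal.ofReal c * ((2 : ℝ≥0∞) ^ (((j : ℝ) * d) * (1 / u2 - p1 / (p2 * u1))) *
              (2 : ℝ≥0∞) ^ (((j : ℝ) * d) * (1 / p1 - 1 / u1) * (1 - p1 / p2))) *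
              ((2 : ℝ≥0∞) ^ (-(k : ℝ) / 2 ^ (j * d)) *
                (2 : ℝ≥0∞) ^ (-((j : ℝ) * d) * (1 / p1 - 1 / p2)))) := by
  obtain ⟨c₁, hc₁, bound_of_le⟩ := MorreyEntropy.exists_entropyNumber_mNorm_le_of_le hp1 h
  obtain ⟨c₂, hc₂, bound_of_ge⟩ := MorreyEntropy.exists_entropyNumber_mNorm_le_of_ge hp1
  refine ⟨1 + c₁ + c₂, by positivity, fun d u1 u2 _ hu2 hpu j k hk ↦
    ⟨?_, fun hk_le ↦ ?_, fun hk_ge ↦ ?_⟩⟩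
  · exact (MorreyEntropy.entropyNumber_mNorm_le hp1 h hpu).trans <|
      le_mul_of_one_le_left' (ENNReal.one_le_ofReal.2 (by linarith))
  · refine (bound_of_le hpu hk hk_le).trans ?_
    gcongr
    linarith
  · refine (bound_of_ge (hp1.trans_le h) hu2 hk_ge).trans ?_
    gcongr
    linarith

theorem stmt17 (d : ℕ) (hd : 1 ≤ d) (u1 p1 u2 p2 : ℝ)
    (hp1 : 0 < p1) (hp1u1 : p1 ≤ u1) (hp2 : 0 < p2) (hp2u2 : p2 ≤ u2)
    (h1 : p1 < p2) (h2 : p1 / u1 < p2 / u2) :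
    ∃ c : ℝ, 0 < c ∧ ∀ j : ℕ, 1 ≤ j → ∀ k : ℕ, 1 ≤ k →
      (((k : ℝ) ≤ Real.log (2 ^ (j * d + 1)) →
          entropyNumber (mNorm d u1 p1 j) (mNorm d u2 p2 j) (2 * k - 1) ≤
            ENNReal.ofReal c * ((2 : ℝ≥0∞) ^ (((j : ℝ) * d) * (1 / u2 - p1 / (p2 * u1))) *
              (2 : ℝ≥0∞) ^ (((j : ℝ) * d) * (1 / p1 - 1 / u1) * (1 - p1 / p2)))) ∧
        (Real.log (2 ^ (j * d + 1)) ≤ (k : ℝ) ∧ (k : ℝ) ≤ 2 ^ (j * d + 1) →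
          entropyNumber (mNorm d u1 p1 j) (mNorm d u2 p2 j) (2 * k - 1) ≤
            ENNReal.ofReal c * ((2 : ℝ≥0∞) ^ (((j : ℝ) * d) * (1 / u2 - p1 / (p2 * u1))) *
              (2 : ℝ≥0∞) ^ (((j : ℝ) * d) * (1 / p1 - 1 / u1) * (1 - p1 / p2))) *
              ENNReal.ofReal ((Real.log (1 + 2 ^ (j * d) / (k : ℝ)) / (k : ℝ)) ^
                (1 / p1 - 1 / p2))) ∧
        ((2 : ℝ) ^ (j * d + 1) ≤ (k : ℝ) →
          entropyNumber (mNorm d u1 p1 j) (mNorm d u2 p2 j) (2 * k - 1) ≤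
            ENNReal.ofReal c * ((2 : ℝ≥0∞) ^ (((j : ℝ) * d) * (1 / u2 - p1 / (p2 * u1))) *
              (2 : ℝ≥0∞) ^ (((j : ℝ) * d) * (1 / p1 - 1 / u1) * (1 - p1 / p2))) *
              ((2 : ℝ≥0∞) ^ (-(k : ℝ) / 2 ^ (j * d)) *
                (2 : ℝ≥0∞) ^ (-((j : ℝ) * d) * (1 / p1 - 1 / p2))))) := by
  obtain ⟨c, hc, bound⟩ := stmt17_general p1 p2 hp1 h1.le
  refine ⟨c, hc, fun j _ k hk ↦ ?_⟩
  obtain ⟨small, middle, large⟩ :=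
    bound d u1 u2 (hp1.trans_le hp1u1) (hp2.trans_le hp2u2) h2.le j k hk
  exact ⟨fun _ ↦ small, fun h ↦ middle h.2, large⟩
end

section
/- Let d ≥ 1 be an integer, 0 < p2 ≤ p1 ≤ u2 ≤ u1 < ∞ and r > 0. Then there exists a constant c > 0 such that for all j ∈ ℕ₀: sup_{n ∈ ℕ} n^{1/r} e_n(id_j) ≤ c · 2^{jd(1/r − 1/u1 + 1/u2)}. -/
open scoped ENNReal NNReal

/-!
The unit ball of a quasi-norm with constant `K` on a real space of dimension `D` has finite positive
volume, and scaling it by `t` multiplies its volume by `t ^ D`. Around the points of an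
`ε`-separated subset, the balls of radius `ε / (2 K)` are disjoint and lie in the ball of radius
`2 K`, so there are at most `(4 K² / ε) ^ D` such points. A maximal `ε`-separated set is an `ε`-net,
whence `e_n ≤ 4 K² 2 ^ (-(n - 1) / D)` for the identity of the quasi-normed space. This exponential
decay at scale `D` gives `sup_n n ^ (1 / r) e_n ≲ D ^ (1 / r)`, where `D = 2 · 2 ^ (j d)` for the
Morrey sequence space. Changing the target space costs the norm of the embedding, which is at most
`2 ^ (j d (1 / u₂ - 1 / u₁))` by Hölder's inequality on each dyadic cube.
-/

open MeasureTheory Module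
open scoped Pointwise SetRel

section Covering

variable {α : Type*} {R : SetRel α α} {S : Set α} {L : ℕ}

lemma exists_finset_isCover_of_isSeparated_card_le [R.IsRefl] [R.IsSymm]
    (hL : ∀ s : Finset α, ↑s ⊆ S → R.IsSeparated (s : Set α) → s.card ≤ L) :
    ∃ s : Finset α, s.card ≤ L ∧ R.IsCover S s := by
  classical
  let T : Set (Finset α) := {s | ↑s ⊆ S ∧ R.IsSeparated (s : Set α)}
  have hT : (Finset.card '' T).Finite :=
    (Set.finite_Iic L).subset (Set.image_subset_iff.2 fun s hs ↦ hL s hs.1 hs.2)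
  obtain ⟨s, ⟨hsS, hsep⟩, hmax⟩ :=
    Set.Finite.exists_maximalFor' Finset.card T hT ⟨∅, by simp [T]⟩
  refine ⟨s, hL s hsS hsep, fun x hx ↦ ?_⟩
  by_contra! hfar
  have hxs : x ∉ s := fun h ↦ hfar x h R.rfl
  have hinsert : insert x s ∈ T := by
    refine ⟨?_, ?_⟩ <;> rw [Finset.coe_insert]
    · exact Set.insert_subset hx hsS
    · exact hsep.insert fun y hy hxy ↦ (hfar y hy hxy).elim
  have hcard := hmax hinsert (Finset.card_le_card (Finset.subset_insert x s))
  rw [Finset.card_insert_of_notMem hxs] at hcard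
  omega

end Covering

/-- The relation `N (x - y) ≤ ε`, so that `SetRel.IsCover (closeness N ε) S T` says that the closed
`N`-balls of radius `ε` centred in `T` cover `S`. -/
def closeness {Λ : Type*} [AddCommGroup Λ] (N : Λ → ℝ≥0∞) (ε : ℝ≥0∞) : SetRel Λ Λ :=
  {p | N (p.1 - p.2) ≤ ε}

section EntropyNumber

variable {Λ : Type*} [AddCommGroup Λ] {N₁ N₂ : Λ → ℝ≥0∞}

lemma entropyNumber_le_of_isCover {ε : ℝ≥0∞} (hε : 0 < ε) {k : ℕ} {s : Finset Λ}
    (hcard : s.card ≤ 2 ^ (k - 1)) (hs : (closeness N₂ ε).IsCover {x | N₁ x ≤ 1} s) :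
    entropyNumber N₁ N₂ k ≤ ε := by
  obtain ⟨f⟩ : Nonempty (s ↪ Fin (2 ^ (k - 1))) :=
    Function.Embedding.nonempty_of_card_le (by simpa using hcard)
  refine sInf_le ⟨hε, Function.extend f (↑) 0, fun x hx ↦ ?_⟩
  obtain ⟨y, hy, hxy⟩ := hs hx
  exact ⟨f ⟨y, hy⟩, by rwa [f.injective.extend_apply]⟩

lemma entropyNumber_le_mul {N₃ : Λ → ℝ≥0∞} {A : ℝ≥0∞} (hA₀ : A ≠ 0) (hA : A ≠ ∞)
    (h : ∀ x, N₃ x ≤ A * N₂ x) (k : ℕ) :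
    entropyNumber N₁ N₃ k ≤ A * entropyNumber N₁ N₂ k := by
  simp only [entropyNumber, sInf_eq_iInf', ENNReal.mul_iInf_of_ne hA₀ hA]
  refine le_iInf fun ⟨ε, hε, c, hc⟩ ↦ iInf_le_of_le
    ⟨A * ε, ENNReal.mul_pos hA₀ hε.ne', c, fun x hx ↦ ?_⟩ le_rfl
  obtain ⟨i, hi⟩ := hc x hx
  exact ⟨i, (h _).trans (by gcongr)⟩

lemma entropyNumber_le_entropyNumber_comp {E : Type*} [AddCommGroup E] {ι : E → Λ} {ρ : Λ → E}
    (h₁ : ∀ x, N₁ (ι (ρ x)) ≤ N₁ x) (h₂ : ∀ x y, N₂ (x - ι y) ≤ N₂ (ι (ρ x - y))) (k : ℕ) :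
    entropyNumber N₁ N₂ k ≤ entropyNumber (N₁ ∘ ι) (N₂ ∘ ι) k := by
  refine sInf_le_sInf fun ε ⟨hε, c, hc⟩ ↦ ⟨hε, ι ∘ c, fun x hx ↦ ?_⟩
  obtain ⟨i, hi⟩ := hc (ρ x) ((h₁ x).trans hx)
  exact ⟨i, (h₂ x _).trans hi⟩

end EntropyNumber

section Decay

lemma rpow_mul_two_rpow_neg_le {a t : ℝ} (ha : 0 < a) (ht : 0 ≤ t) :
    t ^ a * 2 ^ (-t) ≤ (a / Real.log 2) ^ a := by
  have : 0 < Real.log 2 := Real.log_pos one_lt_two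
  set s := Real.log 2 * t / a with hs
  have hts : t = a / Real.log 2 * s := by rw [hs]; field_simp
  have hexp : (2 : ℝ) ^ (-t) = Real.exp (-s) ^ a := by
    rw [Real.rpow_def_of_pos two_pos, ← Real.exp_mul, hs]
    congr 1
    field_simp
  have hs₁ : s * Real.exp (-s) ≤ 1 := by
    rw [Real.exp_neg, ← div_eq_mul_inv, div_le_one (Real.exp_pos s)]
    linarith [Real.add_one_le_exp s]
  calc t ^ a * 2 ^ (-t) = (a / Real.log 2) ^ a * (s * Real.exp (-s)) ^ a := by
        rw [hexp, ← Real.mul_rpow ht (by positivity), ← Real.mul_rpow (by positivity)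
          (by positivity), ← mul_assoc, ← hts]
    _ ≤ (a / Real.log 2) ^ a * 1 := by
        gcongr
        exact Real.rpow_le_one (by positivity) hs₁ ha.le
    _ = (a / Real.log 2) ^ a := mul_one _

lemma rpow_mul_two_rpow_neg_sub_one_div_le {a n D : ℝ} (ha : 0 < a) (hn : 0 ≤ n) (hD : 1 ≤ D) :
    n ^ a * 2 ^ (-((n - 1) / D)) ≤ 2 * (a / Real.log 2) ^ a * D ^ a := by
  have hexp : -((n - 1) / D) ≤ 1 + -(n / D) := by
    have := div_le_one_of_le₀ hD (by positivity)
    rw [sub_div]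
    linarith
  calc n ^ a * 2 ^ (-((n - 1) / D)) ≤ n ^ a * 2 ^ (1 + -(n / D)) := by
        gcongr
        exact one_le_two
    _ = 2 * ((n / D) ^ a * 2 ^ (-(n / D))) * D ^ a := by
        rw [Real.rpow_add two_pos, Real.rpow_one, Real.div_rpow hn (by positivity)]
        field_simp
    _ ≤ 2 * (a / Real.log 2) ^ a * D ^ a := by
        gcongr
        exact rpow_mul_two_rpow_neg_le ha (by positivity)

end Decay

/-- `F` is a finite real quasi-norm with constant `K`, except that `F x = 0` is not required to
imply `x = 0`. -/
structure IsQuasiNorm {E : Type*} [AddCommGroup E] [Module ℝ E] (K : ℝ≥0) (F : E → ℝ≥0∞) :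
    Prop where
  one_le : 1 ≤ K
  lt_top : ∀ x, F x < ∞
  smul : ∀ (t : ℝ) x, F (t • x) = ‖t‖ₑ * F x
  add_le : ∀ x y, F (x + y) ≤ K * (F x + F y)

namespace IsQuasiNorm

section Algebra

variable {E : Type*} [AddCommGroup E] [Module ℝ E] {K : ℝ≥0} {F : E → ℝ≥0∞}

lemma map_zero (hF : IsQuasiNorm K F) : F 0 = 0 := by
  simpa using hF.smul 0 0

lemma map_neg (hF : IsQuasiNorm K F) (x : E) : F (-x) = F x := by
  simpa using hF.smul (-1) x

lemma map_sub_rev (hF : IsQuasiNorm K F) (x y : E) : F (x - y) = F (y - x) := by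
  rw [← hF.map_neg, neg_sub]

lemma comp {E' : Type*} [AddCommGroup E'] [Module ℝ E'] (hF : IsQuasiNorm K F) (ι : E' →ₗ[ℝ] E) :
    IsQuasiNorm K (F ∘ ι) where
  one_le := hF.one_le
  lt_top x := hF.lt_top (ι x)
  smul t x := by simp only [Function.comp_apply, map_smul, hF.smul]
  add_le x y := by simpa only [Function.comp_apply, map_add] using hF.add_le (ι x) (ι y)

lemma isRefl_closeness (hF : IsQuasiNorm K F) (ε : ℝ≥0∞) : (closeness F ε).IsRefl :=
  ⟨fun x ↦ by simp [closeness, hF.map_zero]⟩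

lemma isSymm_closeness (hF : IsQuasiNorm K F) (ε : ℝ≥0∞) : (closeness F ε).IsSymm :=
  ⟨fun x y h ↦ by simpa only [closeness, Set.mem_ofPred_eq, hF.map_sub_rev y x] using h⟩

lemma setOf_le_eq_smul (hF : IsQuasiNorm K F) {t : ℝ≥0} (ht : t ≠ 0) :
    {x | F x ≤ t} = t • {x | F x ≤ 1} := by
  ext x
  have hsmul : F (t⁻¹ • x) = (t : ℝ≥0∞)⁻¹ * F x := by
    rw [NNReal.smul_def, hF.smul, NNReal.enorm_eq, ENNReal.coe_inv ht]
  rw [Set.mem_smul_set_iff_inv_smul_mem₀ ht, Set.mem_ofPred_eq, Set.mem_ofPred_eq, hsmul,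
    ENNReal.inv_mul_le_iff (by simpa using ht) ENNReal.coe_ne_top, mul_one]

lemma pairwiseDisjoint_translates (hF : IsQuasiNorm K F) {ε : ℝ≥0} {s : Set E}
    (hsep : (closeness F ε).IsSeparated s) :
    s.PairwiseDisjoint fun x ↦ (· - x) ⁻¹' {z | F z ≤ (ε / (2 * K) : ℝ≥0)} := by
  have hK : K ≠ 0 := (zero_lt_one.trans_le hF.one_le).ne'
  intro x hx y hy hxy
  refine Set.disjoint_left.2 fun z hzx hzy ↦ hsep hx hy hxy ?_
  calc F (x - y) = F ((x - z) + (z - y)) := by rw [sub_add_sub_cancel]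
    _ ≤ K * (F (x - z) + F (z - y)) := hF.add_le _ _
    _ ≤ K * ((ε / (2 * K) : ℝ≥0) + (ε / (2 * K) : ℝ≥0)) := by
        rw [hF.map_sub_rev x z]; gcongr <;> assumption
    _ = ε := by norm_cast; field_simp; norm_num

lemma iUnion_translates_subset (hF : IsQuasiNorm K F) {δ : ℝ≥0} (hδ : δ ≤ 1) {s : Set E}
    (hs : s ⊆ {x | F x ≤ 1}) :
    ⋃ x ∈ s, (· - x) ⁻¹' {z | F z ≤ δ} ⊆ {z | F z ≤ (2 * K : ℝ≥0)} := by
  refine Set.iUnion₂_subset fun x hx z hz ↦ ?_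
  calc F z = F ((z - x) + x) := by rw [sub_add_cancel]
    _ ≤ K * (F (z - x) + F x) := hF.add_le _ _
    _ ≤ K * (1 + 1) := by
        gcongr
        · exact hz.trans (mod_cast hδ)
        · exact hs hx
    _ = (2 * K : ℝ≥0) := by push_cast; ring

end Algebra

section Volume

variable {E : Type*} [NormedAddCommGroup E] [NormedSpace ℝ E] [FiniteDimensional ℝ E]
  [MeasurableSpace E] [BorelSpace E] {K : ℝ≥0} {F : E → ℝ≥0∞}

lemma addHaar_setOf_le (hF : IsQuasiNorm K F) (μ : Measure E) [μ.IsAddHaarMeasure]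
    {t : ℝ≥0} (ht : t ≠ 0) : μ {x | F x ≤ t} = t ^ finrank ℝ E * μ {x | F x ≤ 1} := by
  rw [hF.setOf_le_eq_smul ht, Measure.addHaar_nnreal_smul]

lemma addHaar_setOf_le_one_ne_zero (hF : IsQuasiNorm K F) (μ : Measure E) [μ.IsAddHaarMeasure] :
    μ {x | F x ≤ 1} ≠ 0 := by
  intro h
  have hcover : ⋃ n : ℕ, {x | F x ≤ (n + 1 : ℝ≥0)} = Set.univ := by
    refine Set.eq_univ_of_forall fun x ↦ Set.mem_iUnion.2 ?_
    obtain ⟨n, hn⟩ := ENNReal.exists_nat_gt (hF.lt_top x).ne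
    exact ⟨n, hn.le.trans (by simp)⟩
  have hnull : μ Set.univ = 0 := by
    rw [← hcover, measure_iUnion_null_iff]
    intro n
    rw [hF.addHaar_setOf_le μ (by positivity), h, mul_zero]
  exact NeZero.ne μ (Measure.measure_univ_eq_zero.1 hnull)

variable (hF : IsQuasiNorm K F) (hmeas : Measurable F)
  (hbdd : Bornology.IsBounded {x | F x ≤ 1})
include hF hmeas hbdd

lemma card_le_of_isSeparated {ε : ℝ≥0} (hε₀ : ε ≠ 0) (hε : ε ≤ 1) {s : Finset E}
    (hs : ↑s ⊆ {x | F x ≤ 1}) (hsep : (closeness F ε).IsSeparated (s : Set E)) :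
    (s.card : ℝ≥0) ≤ (4 * K ^ 2 / ε) ^ finrank ℝ E := by
  have hK : K ≠ 0 := (zero_lt_one.trans_le hF.one_le).ne'
  let μ : Measure E := Measure.addHaar
  set δ : ℝ≥0 := ε / (2 * K) with hδ
  have hδ₀ : δ ≠ 0 := by positivity
  have hδ₁ : δ ≤ 1 := div_le_one_of_le₀
    (hε.trans (hF.one_le.trans (le_mul_of_one_le_left' one_le_two))) (by positivity)
  have hvol : s.card * μ {z | F z ≤ δ} ≤ μ {z | F z ≤ (2 * K : ℝ≥0)} :=
    calc s.card * μ {z | F z ≤ δ}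
        = ∑ x ∈ s, μ ((· - x) ⁻¹' {z | F z ≤ δ}) := by
          simp only [sub_eq_add_neg, measure_preimage_add_right, Finset.sum_const, nsmul_eq_mul]
      _ = μ (⋃ x ∈ s, (· - x) ⁻¹' {z | F z ≤ δ}) :=
          (measure_biUnion_finset (hF.pairwiseDisjoint_translates hsep) fun x _ ↦
            (measurableSet_le hmeas measurable_const).preimage (measurable_sub_const x)).symm
      _ ≤ μ {z | F z ≤ (2 * K : ℝ≥0)} := measure_mono (hF.iUnion_translates_subset hδ₁ hs)
  rw [hF.addHaar_setOf_le μ hδ₀, hF.addHaar_setOf_le μ (by positivity), ← mul_assoc,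
    ENNReal.mul_le_mul_iff_left (hF.addHaar_setOf_le_one_ne_zero μ) hbdd.measure_lt_top.ne] at hvol
  have hratio : 4 * K ^ 2 / ε = 2 * K / δ := by rw [hδ]; field_simp; norm_num
  rw [hratio, div_pow, le_div_iff₀ (by positivity)]
  exact_mod_cast hvol

lemma exists_finset_isCover {ε : ℝ≥0} (hε : ε ≠ 0) {L : ℕ} (hL₁ : 1 ≤ L)
    (hL : (4 * K ^ 2 / ε) ^ finrank ℝ E ≤ L) :
    ∃ s : Finset E, s.card ≤ L ∧ (closeness F ε).IsCover {x | F x ≤ 1} s := by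
  rcases le_total ε 1 with hε₁ | hε₁
  · have := hF.isRefl_closeness ε
    have := hF.isSymm_closeness ε
    refine exists_finset_isCover_of_isSeparated_card_le fun s hs hsep ↦ ?_
    exact_mod_cast (hF.card_le_of_isSeparated hmeas hbdd hε hε₁ hs hsep).trans hL
  · refine ⟨{0}, by simpa using hL₁, fun x hx ↦ ⟨0, by simp, ?_⟩⟩
    simpa [closeness] using hx.trans (mod_cast hε₁)

theorem entropyNumber_self_le (k : ℕ) :
    entropyNumber F F k ≤
      (4 * K ^ 2 * 2 ^ (-((k - 1 : ℕ) / finrank ℝ E : ℝ)) : ℝ≥0) := by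
  set D := finrank ℝ E
  set ε : ℝ≥0 := 4 * K ^ 2 * 2 ^ (-((k - 1 : ℕ) / D : ℝ)) with hε
  have hK : K ≠ 0 := (zero_lt_one.trans_le hF.one_le).ne'
  have hε₀ : ε ≠ 0 := by positivity
  have hcount : (4 * K ^ 2 / ε) ^ D ≤ (2 ^ (k - 1) : ℕ) :=
    calc (4 * K ^ 2 / ε) ^ D = (2 : ℝ≥0) ^ ((k - 1 : ℕ) / D * D : ℝ) := by
          rw [NNReal.rpow_mul, NNReal.rpow_natCast, hε, NNReal.rpow_neg]
          congr 1
          field_simp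
      _ ≤ 2 ^ ((k - 1 : ℕ) : ℝ) := by
          gcongr
          · exact one_le_two
          · rw [div_mul_eq_mul_div, mul_div_assoc]
            exact mul_le_of_le_one_right (by positivity) (div_self_le_one _)
      _ = (2 ^ (k - 1) : ℕ) := by push_cast; exact NNReal.rpow_natCast 2 _
  obtain ⟨s, hcard, hs⟩ := hF.exists_finset_isCover hmeas hbdd hε₀ Nat.one_le_two_pow hcount
  exact entropyNumber_le_of_isCover (by positivity) hcard hs

theorem rpow_mul_entropyNumber_self_le [Nontrivial E] {a : ℝ} (ha : 0 < a) {k : ℕ} (hk : 0 < k) :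
    (k : ℝ≥0∞) ^ a * entropyNumber F F k ≤
      ENNReal.ofReal (8 * K ^ 2 * (a / Real.log 2) ^ a) * (finrank ℝ E : ℝ≥0∞) ^ a := by
  have hD : (1 : ℝ) ≤ finrank ℝ E := mod_cast finrank_pos
  calc (k : ℝ≥0∞) ^ a * entropyNumber F F k
      ≤ (k : ℝ≥0∞) ^ a * (4 * K ^ 2 * 2 ^ (-((k - 1 : ℕ) / finrank ℝ E : ℝ)) : ℝ≥0) := by
        gcongr
        exact hF.entropyNumber_self_le hmeas hbdd k
    _ = ENNReal.ofReal (4 * K ^ 2 * ((k : ℝ) ^ a * 2 ^ (-((k - 1) / finrank ℝ E : ℝ)))) := by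
        rw [← ENNReal.ofReal_coe_nnreal, ← ENNReal.ofReal_natCast k,
          ENNReal.ofReal_rpow_of_nonneg (by positivity) ha.le, ← ENNReal.ofReal_mul (by positivity)]
        push_cast [Nat.cast_sub hk]
        congr 1
        ring
    _ ≤ ENNReal.ofReal (4 * K ^ 2 * (2 * (a / Real.log 2) ^ a * (finrank ℝ E : ℝ) ^ a)) := by
        gcongr ENNReal.ofReal (_ * ?_)
        exact rpow_mul_two_rpow_neg_sub_one_div_le ha (by positivity) hD
    _ = ENNReal.ofReal (8 * K ^ 2 * (a / Real.log 2) ^ a) * (finrank ℝ E : ℝ≥0∞) ^ a := by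
        rw [← ENNReal.ofReal_natCast (finrank ℝ E),
          ENNReal.ofReal_rpow_of_nonneg (by positivity) ha.le, ← ENNReal.ofReal_mul]
        · congr 1
          ring
        · have := Real.log_pos one_lt_two
          positivity

end Volume

end IsQuasiNorm

section Cubes

variable {d j ν : ℕ} {m k : Fin d → ℤ}

lemma inUnitCube_iff_cubeSub : inUnitCube d j m ↔ cubeSub d j 0 m 0 := by
  simp [inUnitCube, cubeSub]

lemma cubeSub_self : cubeSub d j j m m := by
  simp [cubeSub]

lemma cubeSub.inUnitCube (h : cubeSub d j ν m k) (hν : ν ≤ j) (hk : inUnitCube d ν k) :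
    inUnitCube d j m := by
  intro i
  have hpow : (2 : ℤ) ^ ν * 2 ^ (j - ν) = 2 ^ j := by rw [← pow_add, Nat.add_sub_cancel' hν]
  refine ⟨(mul_nonneg (hk i).1 (by positivity)).trans (h i).1, (h i).2.trans_le ?_⟩
  rw [← hpow]
  gcongr
  exact (hk i).2

variable (d j ν k)

lemma setOf_cubeSub :
    {m | cubeSub d j ν m k} = (Fintype.piFinset fun i ↦
      Finset.Ico (k i * 2 ^ (j - ν)) ((k i + 1) * 2 ^ (j - ν)) : Finset (Fin d → ℤ)) := by
  ext m
  simp [cubeSub]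

instance finite_cubeSub : Finite {m // cubeSub d j ν m k} := by
  have := (Finset.finite_toSet _).subset (setOf_cubeSub d j ν k).le
  exact this.to_subtype

lemma card_cubeSub : Nat.card {m // cubeSub d j ν m k} = 2 ^ (d * (j - ν)) := by
  change Nat.card {m | cubeSub d j ν m k} = _
  rw [Nat.card_coe_set_eq, setOf_cubeSub, Set.ncard_coe_finset, Fintype.card_piFinset]
  simp [add_mul, Int.toNat_pow_of_nonneg, ← pow_mul, mul_comm]

instance finite_inUnitCube : Finite {m // inUnitCube d j m} := by
  simp only [inUnitCube_iff_cubeSub]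
  infer_instance

lemma card_inUnitCube : Nat.card {m // inUnitCube d j m} = 2 ^ (d * j) := by
  simp only [inUnitCube_iff_cubeSub, card_cubeSub, Nat.sub_zero]

instance nonempty_inUnitCube : Nonempty {m // inUnitCube d j m} :=
  ⟨0, fun i ↦ by simp⟩

noncomputable instance fintype_inUnitCube : Fintype {m // inUnitCube d j m} :=
  Fintype.ofFinite _

instance finite_subcubes :
    Finite {νk : ℕ × (Fin d → ℤ) // νk.1 ≤ j ∧ inUnitCube d νk.1 νk.2} := by
  have hfin (ν : ℕ) : {k | inUnitCube d ν k}.Finite := Set.finite_coe_iff.1 (finite_inUnitCube d ν)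
  exact (((Set.finite_Iic j).biUnion fun ν _ ↦ (hfin ν).image (Prod.mk ν)).subset fun νk h ↦
    Set.mem_biUnion (Set.mem_Iic.2 h.1) (Set.mem_image_of_mem _ (Set.mem_ofPred.2 h.2))).to_subtype

end Cubes

section MorreyNorm

lemma one_le_LpAddConst (q : ℝ≥0∞) : 1 ≤ ENNReal.LpAddConst q := by
  unfold ENNReal.LpAddConst
  split_ifs with hq
  · have htop : q ≠ ∞ := (hq.2.trans ENNReal.one_lt_top).ne
    refine ENNReal.one_le_rpow one_le_two (sub_pos.2 ?_)
    refine one_lt_one_div (ENNReal.toReal_pos hq.1.ne' htop) ?_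
    rw [← ENNReal.toReal_one]
    exact ENNReal.toReal_strict_mono ENNReal.one_ne_top hq.2
  · exact le_rfl

variable (d : ℕ) (u : ℝ) {p : ℝ} (j : ℕ)

lemma mNorm_eq_iSup_eLpNorm (hp : 0 < p) (x : (Fin d → ℤ) → ℂ) :
    mNorm d u p j x = ⨆ νk : {νk : ℕ × (Fin d → ℤ) // νk.1 ≤ j ∧ inUnitCube d νk.1 νk.2},
      (2 : ℝ≥0∞) ^ ((d : ℝ) * ((j : ℝ) - (νk.1.1 : ℝ)) * (1 / u - 1 / p)) *
        eLpNorm (fun m : {m // cubeSub d j νk.1.1 m νk.1.2} ↦ x m) (ENNReal.ofReal p)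
          Measure.count := by
  simp only [mNorm, eLpNorm_eq_lintegral_rpow_enorm_toReal (ENNReal.ofReal_pos.2 hp).ne'
    ENNReal.ofReal_ne_top, lintegral_count, ENNReal.toReal_ofReal hp.le]
  rfl

lemma mNorm_congr {x y : (Fin d → ℤ) → ℂ} (h : ∀ m, inUnitCube d j m → x m = y m) :
    mNorm d u p j x = mNorm d u p j y := by
  refine iSup_congr fun νk ↦ ?_
  congr 3 with m
  rw [h _ (m.2.inUnitCube νk.2.1 νk.2.2)]

lemma measurable_mNorm : Measurable (mNorm d u p j) := by
  refine Measurable.iSup fun νk ↦ Measurable.const_mul (Measurable.pow_const ?_ _) _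
  exact Measurable.tsum fun m ↦ by fun_prop

lemma isQuasiNorm_mNorm (hp : 0 < p) :
    IsQuasiNorm (ENNReal.LpAddConst (ENNReal.ofReal p)).toNNReal (mNorm d u p j) where
  one_le := by
    rw [← ENNReal.coe_le_coe, ENNReal.coe_toNNReal (ENNReal.LpAddConst_lt_top _).ne]
    exact one_le_LpAddConst _
  lt_top x := by
    rw [mNorm_eq_iSup_eLpNorm d u j hp, lt_top_iff_ne_top]
    refine iSup_ne_top fun νk ↦ ENNReal.mul_ne_top (by simp) ?_
    exact MemLp.of_discrete.eLpNorm_ne_top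
  smul t x := by
    simp only [mNorm_eq_iSup_eLpNorm d u j hp, ENNReal.mul_iSup]
    refine iSup_congr fun νk ↦ ?_
    rw [mul_left_comm]
    congr 1
    exact eLpNorm_const_smul t _ _ _
  add_le x y := by
    rw [ENNReal.coe_toNNReal (ENNReal.LpAddConst_lt_top _).ne]
    simp only [mNorm_eq_iSup_eLpNorm d u j hp]
    refine iSup_le fun νk ↦
      (mul_le_mul_right (eLpNorm_add_le' .of_discrete .of_discrete _) _).trans ?_
    rw [mul_left_comm, mul_add]
    gcongr
    · exact le_iSup_of_le νk le_rfl
    · exact le_iSup_of_le νk le_rfl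

lemma enorm_le_mNorm (hp : 0 < p) (x : (Fin d → ℤ) → ℂ) {m : Fin d → ℤ}
    (hm : inUnitCube d j m) : ‖x m‖ₑ ≤ mNorm d u p j x := by
  rw [mNorm_eq_iSup_eLpNorm d u j hp]
  refine le_iSup_of_le ⟨(j, m), le_rfl, hm⟩ ?_
  simpa using enorm_le_eLpNorm_count (fun l : {l // cubeSub d j j l m} ↦ x l)
    ⟨m, cubeSub_self⟩ (ENNReal.ofReal_pos.2 hp).ne'

end MorreyNorm

section Embedding

variable (d : ℕ) {u₁ u₂ p₁ p₂ : ℝ} {j ν : ℕ}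

lemma eLpNorm_cubeSub_le (hp₂ : 0 < p₂) (hp : p₂ ≤ p₁) (hν : ν ≤ j) (k : Fin d → ℤ)
    (x : {m // cubeSub d j ν m k} → ℂ) :
    eLpNorm x (ENNReal.ofReal p₂) Measure.count ≤
      2 ^ ((d : ℝ) * (j - ν) * (1 / p₂ - 1 / p₁)) *
        eLpNorm x (ENNReal.ofReal p₁) Measure.count := by
  have hcard : Measure.count (Set.univ : Set {m // cubeSub d j ν m k}) =
      (2 : ℝ≥0∞) ^ ((d : ℝ) * (j - ν)) := by
    rw [Measure.count_univ, ENat.card_eq_coe_natCard, card_cubeSub, ENat.toENNReal_coe,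
      Nat.cast_pow, Nat.cast_ofNat, ← ENNReal.rpow_natCast]
    push_cast [Nat.cast_sub hν]
    rfl
  have hHolder := eLpNorm_le_eLpNorm_mul_rpow_measure_univ (μ := Measure.count)
    (ENNReal.ofReal_le_ofReal hp) (AEStronglyMeasurable.of_discrete (f := x))
  rwa [hcard, ← ENNReal.rpow_mul, ENNReal.toReal_ofReal hp₂.le,
    ENNReal.toReal_ofReal (hp₂.le.trans hp), mul_comm] at hHolder

lemma mNorm_le_mul_mNorm (hp₂ : 0 < p₂) (hp : p₂ ≤ p₁) (hu₂ : 0 < u₂) (hu : u₂ ≤ u₁)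
    (x : (Fin d → ℤ) → ℂ) :
    mNorm d u₂ p₂ j x ≤ 2 ^ ((j : ℝ) * d * (1 / u₂ - 1 / u₁)) * mNorm d u₁ p₁ j x := by
  rw [mNorm_eq_iSup_eLpNorm d u₂ j hp₂, mNorm_eq_iSup_eLpNorm d u₁ j (hp₂.trans_le hp),
    ENNReal.mul_iSup]
  refine iSup_mono fun ⟨⟨ν, k⟩, hν, _⟩ ↦ ?_
  have hexp : (d : ℝ) * (j - ν) * (1 / u₂ - 1 / p₂) + d * (j - ν) * (1 / p₂ - 1 / p₁) ≤
      j * d * (1 / u₂ - 1 / u₁) + d * (j - ν) * (1 / u₁ - 1 / p₁) := by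
    have : 0 ≤ (d : ℝ) * ν * (1 / u₂ - 1 / u₁) :=
      mul_nonneg (by positivity) (sub_nonneg.2 (one_div_le_one_div_of_le hu₂ hu))
    linarith
  refine (mul_le_mul_right (eLpNorm_cubeSub_le d hp₂ hp hν k _) _).trans ?_
  rw [← mul_assoc, ← mul_assoc, ← ENNReal.rpow_add _ _ two_ne_zero ENNReal.ofNat_ne_top,
    ← ENNReal.rpow_add _ _ two_ne_zero ENNReal.ofNat_ne_top]
  gcongr
  exact one_le_two

end Embedding

/-- Extension by zero of coefficients on the level-`j` subcubes of `Q` to all of `ℤ^d`. It is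
real-linear because the volume argument runs over `ℝ`. -/
noncomputable def cubeExtension (d j : ℕ) :
    ({m // inUnitCube d j m} → ℂ) →ₗ[ℝ] ((Fin d → ℤ) → ℂ) :=
  (Function.ExtendByZero.linearMap ℂ Subtype.val).restrictScalars ℝ

section MorreyEntropy

variable (d : ℕ) (u : ℝ) {p : ℝ} (j : ℕ)

lemma cubeExtension_apply (y : {m // inUnitCube d j m} → ℂ) (m : {m // inUnitCube d j m}) :
    cubeExtension d j y m = y m :=
  Subtype.val_injective.extend_apply _ _ _

lemma isBounded_setOf_mNorm_cubeExtension_le_one (hp : 0 < p) :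
    Bornology.IsBounded {y | (mNorm d u p j ∘ cubeExtension d j) y ≤ 1} := by
  refine (Metric.isBounded_closedBall (x := 0) (r := 1)).subset fun y hy ↦ ?_
  rw [mem_closedBall_zero_iff, pi_norm_le_iff_of_nonneg zero_le_one]
  intro m
  have := (enorm_le_mNorm d u j hp _ m.2).trans hy
  rwa [cubeExtension_apply, ← ofReal_norm, ENNReal.ofReal_le_one] at this

lemma measurable_mNorm_cubeExtension : Measurable (mNorm d u p j ∘ cubeExtension d j) :=
  (measurable_mNorm d u j).comp
    (LinearMap.continuous_of_finiteDimensional (cubeExtension d j)).measurable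

lemma finrank_inUnitCube_complex :
    finrank ℝ ({m // inUnitCube d j m} → ℂ) = 2 ^ (d * j) * 2 := by
  rw [finrank_pi_fintype, Finset.sum_const, Complex.finrank_real_complex, Finset.card_univ,
    ← Nat.card_eq_fintype_card, card_inUnitCube, smul_eq_mul]

lemma entropyNumber_mNorm_self_le_comp_cubeExtension (n : ℕ) :
    entropyNumber (mNorm d u p j) (mNorm d u p j) n ≤
      entropyNumber (mNorm d u p j ∘ cubeExtension d j) (mNorm d u p j ∘ cubeExtension d j) n := by
  let restrict (x : (Fin d → ℤ) → ℂ) (m : {m // inUnitCube d j m}) : ℂ := x m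
  have hrestrict (x) (m) (hm : inUnitCube d j m) : cubeExtension d j (restrict x) m = x m :=
    cubeExtension_apply d j (restrict x) ⟨m, hm⟩
  refine entropyNumber_le_entropyNumber_comp (ρ := restrict)
    (fun x ↦ (mNorm_congr d u j (hrestrict x)).le) (fun x y ↦ (mNorm_congr d u j ?_).le) n
  intro m hm
  rw [map_sub, Pi.sub_apply, Pi.sub_apply, hrestrict x m hm]

theorem rpow_mul_entropyNumber_mNorm_self_le (hp : 0 < p) {a : ℝ} (ha : 0 < a) {n : ℕ}
    (hn : 0 < n) :
    (n : ℝ≥0∞) ^ a * entropyNumber (mNorm d u p j) (mNorm d u p j) n ≤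
      ENNReal.ofReal (8 * (ENNReal.LpAddConst (ENNReal.ofReal p)).toNNReal ^ 2 *
        (a / Real.log 2 * 2) ^ a) * 2 ^ ((j : ℝ) * d * a) := by
  set K := (ENNReal.LpAddConst (ENNReal.ofReal p)).toNNReal
  have : 0 < Real.log 2 := Real.log_pos one_lt_two
  set F := mNorm d u p j ∘ cubeExtension d j
  have hdim : (finrank ℝ ({m // inUnitCube d j m} → ℂ) : ℝ≥0∞) ^ a =
      ENNReal.ofReal (2 ^ a) * 2 ^ ((j : ℝ) * d * a) := by
    rw [finrank_inUnitCube_complex, Nat.cast_mul, Nat.cast_pow, Nat.cast_ofNat, mul_comm,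
      ENNReal.mul_rpow_of_nonneg _ _ ha.le, ← ENNReal.rpow_natCast, ← ENNReal.rpow_mul,
      Nat.cast_mul, mul_comm (d : ℝ), ← ENNReal.ofReal_rpow_of_pos two_pos, ENNReal.ofReal_ofNat]
  calc (n : ℝ≥0∞) ^ a * entropyNumber (mNorm d u p j) (mNorm d u p j) n
      ≤ n ^ a * entropyNumber F F n := by
        gcongr
        exact entropyNumber_mNorm_self_le_comp_cubeExtension d u j n
    _ ≤ ENNReal.ofReal (8 * K ^ 2 * (a / Real.log 2) ^ a) *
          (finrank ℝ ({m // inUnitCube d j m} → ℂ) : ℝ≥0∞) ^ a :=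
        ((isQuasiNorm_mNorm d u j hp).comp _).rpow_mul_entropyNumber_self_le
          (measurable_mNorm_cubeExtension d u j)
          (isBounded_setOf_mNorm_cubeExtension_le_one d u j hp) ha hn
    _ = ENNReal.ofReal (8 * K ^ 2 * (a / Real.log 2 * 2) ^ a) * 2 ^ ((j : ℝ) * d * a) := by
        rw [hdim, ← mul_assoc, ← ENNReal.ofReal_mul (by positivity), mul_assoc _ (_ ^ a) (2 ^ a),
          ← Real.mul_rpow (by positivity) two_pos.le]

end MorreyEntropy

theorem stmt19_general (d : ℕ) {u1 p1 u2 p2 : ℝ} (hp2 : 0 < p2) (hp2p1 : p2 ≤ p1) (hu2 : 0 < u2)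
    (hu2u1 : u2 ≤ u1) {r : ℝ} (hr : 0 < r) :
    ∃ c : ℝ, 0 < c ∧ ∀ j : ℕ,
      (⨆ n : {n : ℕ // 0 < n}, ((n : ℕ) : ℝ≥0∞) ^ (1 / r) *
          entropyNumber (mNorm d u1 p1 j) (mNorm d u2 p2 j) (n : ℕ)) ≤
        ENNReal.ofReal c * (2 : ℝ≥0∞) ^ (((j : ℝ) * d) * (1 / r - 1 / u1 + 1 / u2)) := by
  have hp1 : 0 < p1 := hp2.trans_le hp2p1
  set K := (ENNReal.LpAddConst (ENNReal.ofReal p1)).toNNReal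
  set c : ℝ := 8 * K ^ 2 * (1 / r / Real.log 2 * 2) ^ (1 / r)
  have hK : 0 < K := zero_lt_one.trans_le (isQuasiNorm_mNorm d u1 0 hp1).one_le
  have : 0 < Real.log 2 := Real.log_pos one_lt_two
  refine ⟨c, by positivity, fun j ↦ iSup_le fun ⟨n, hn⟩ ↦ ?_⟩
  set A : ℝ≥0∞ := 2 ^ ((j : ℝ) * d * (1 / u2 - 1 / u1))
  calc (n : ℝ≥0∞) ^ (1 / r) * entropyNumber (mNorm d u1 p1 j) (mNorm d u2 p2 j) n
      ≤ n ^ (1 / r) * (A * entropyNumber (mNorm d u1 p1 j) (mNorm d u1 p1 j) n) := by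
        gcongr
        exact entropyNumber_le_mul (by simp) (by simp)
          (mNorm_le_mul_mNorm d hp2 hp2p1 hu2 hu2u1) n
    _ ≤ A * (ENNReal.ofReal c * 2 ^ ((j : ℝ) * d * (1 / r))) := by
        rw [mul_left_comm]
        exact mul_le_mul_right
          (rpow_mul_entropyNumber_mNorm_self_le d u1 j hp1 (one_div_pos.2 hr) hn) A
    _ = ENNReal.ofReal c * 2 ^ ((j : ℝ) * d * (1 / r - 1 / u1 + 1 / u2)) := by
        rw [mul_left_comm, ← ENNReal.rpow_add _ _ two_ne_zero ENNReal.ofNat_ne_top]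
        ring_nf

theorem stmt19 (d : ℕ) (hd : 1 ≤ d) (u1 p1 u2 p2 : ℝ)
    (hp2 : 0 < p2) (hp2p1 : p2 ≤ p1) (hp1u2 : p1 ≤ u2) (hu2u1 : u2 ≤ u1)
    (r : ℝ) (hr : 0 < r) :
    ∃ c : ℝ, 0 < c ∧ ∀ j : ℕ,
      (⨆ n : {n : ℕ // 0 < n}, ((n : ℕ) : ℝ≥0∞) ^ (1 / r) * entropyNumber (mNorm d u1 p1 j) (mNorm d u2 p2 j) (n : ℕ)) ≤
        ENNReal.ofReal c * (2 : ℝ≥0∞) ^ (((j : ℝ) * d) * (1 / r - 1 / u1 + 1 / u2)) :=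
  stmt19_general d hp2 hp2p1 ((hp2.trans_le hp2p1).trans_le hp1u2) hu2u1 hr
end
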